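/- arXiv:math/0303086 — 3 statements merged into one kernel-verified Lean document; each statement's English description precedes it below -/
import Mathlib

section
/- Let (R,m) be a non-Gorenstein Noetherian local ring with m³ = (0), m² ≠ (0), and let M be a nonfree indecomposable finitely generated R-module of G-dimension zero with M* = Hom_R(M,R). Then the lengths satisfy ℓ_R(M*) = ℓ_R(M). -/
open CategoryTheory

noncomputable abbrev ExtGrp (R : Type) [CommRing R] (M N : Type) [AddCommGroup M] [Module R M]
    [AddCommGroup N] [Module R N] (i : ℕ) : Type :=
  ((Ext R (ModuleCat R) i).obj (Opposite.op (ModuleCat.of R M))).obj (ModuleCat.of R N)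

/-- G-dimension zero. -/
def GDimZero (R : Type) [CommRing R] (M : Type) [AddCommGroup M] [Module R M] : Prop :=
  Function.Bijective (Module.Dual.eval R M) ∧
  (∀ i : ℕ, 0 < i → Subsingleton (ExtGrp R M R i)) ∧
  (∀ i : ℕ, 0 < i → Subsingleton (ExtGrp R (Module.Dual R M) R i))

/-- finite self-injective dimension -/
def HasFiniteSelfInjDim (R : Type) [CommRing R] : Prop :=
  ∃ n : ℕ, ∀ (N : ModuleCat R) (i : ℕ), n < i →
    Subsingleton (((Ext R (ModuleCat R) i).obj (Opposite.op N)).obj (ModuleCat.of R R))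

/-- Gorenstein local ring -/
def IsGorensteinLocalRing (R : Type) [CommRing R] : Prop :=
  IsNoetherianRing R ∧ IsLocalRing R ∧ HasFiniteSelfInjDim R

/-- length of a module, as Krull dimension of its submodule lattice -/
noncomputable def mlength (R : Type) [CommRing R] (M : Type) [AddCommGroup M] [Module R M] :
    WithBot ℕ∞ :=
  Order.krullDim (Submodule R M)

/-- An indecomposable (nonzero) module: it is not a direct sum of two proper submodules. -/
def IsIndecomposableModule (R : Type) [CommRing R] (M : Type) [AddCommGroup M]
    [Module R M] : Prop :=
  (⊥ : Submodule R M) ≠ ⊤ ∧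
    ∀ N₁ N₂ : Submodule R M, IsCompl N₁ N₂ → N₁ = ⊥ ∨ N₂ = ⊥

/-- the type of a local ring: length of Hom(k, R) -/
noncomputable def typeLen (R : Type) [CommRing R] [IsLocalRing R] : WithBot ℕ∞ :=
  mlength R ((R ⧸ IsLocalRing.maximalIdeal R) →ₗ[R] R)

namespace S8
open Limits

lemma exists_presentation (R : Type) [CommRing R] (N : Type) [AddCommGroup N] [Module R N]
    (h : Subsingleton (ExtGrp R N R 1)) :
    ∃ (P : ModuleCat.{0} R) (q : P →ₗ[R] N), Module.Projective R P ∧ Function.Surjective q ∧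
      ∀ φ : LinearMap.ker q →ₗ[R] R, ∃ ψ : P →ₗ[R] R, ∀ x : LinearMap.ker q, ψ x = φ x := by
  let P := projectiveResolution (ModuleCat.of R N)
  have hz : IsZero ((P.complex.linearYonedaObj R (ModuleCat.of R R)).homology 1) := by
    refine IsZero.of_iso ?_ (P.isoExt 1 (ModuleCat.of R R)).symm
    have := h
    exact ModuleCat.isZero_of_subsingleton _
  rw [← HomologicalComplex.exactAt_iff_isZero_homology,
    HomologicalComplex.exactAt_iff' _ 0 1 2 (by simp) (by simp)] at hz
  rw [ShortComplex.moduleCat_exact_iff] at hz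
  have hex := P.exact₀
  rw [ShortComplex.moduleCat_exact_iff] at hex
  have hepi : Epi (P.π.f 0) := inferInstance
  rw [ModuleCat.epi_iff_surjective] at hepi
  have hproj : Module.Projective R (P.complex.X 0) :=
    (IsProjective.iff_projective _).2 (P.projective 0)
  let q : P.complex.X 0 →ₗ[R] N := (P.π.f 0).hom
  refine ⟨P.complex.X 0, q, hproj, hepi, ?_⟩
  intro φ
  have hd : ∀ y : P.complex.X 1, q ((P.complex.d 1 0).hom y) = 0 := fun y =>
    congrArg (fun f => f.hom y) P.complex_d_comp_π_f_zero
  let d' : P.complex.X 1 →ₗ[R] LinearMap.ker q :=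
    LinearMap.codRestrict _ (P.complex.d 1 0).hom hd
  obtain ⟨ψ, hψ⟩ := hz (ModuleCat.ofHom (φ ∘ₗ d')) (by
    change P.complex.d 2 1 ≫ ModuleCat.ofHom (φ ∘ₗ d') = 0
    ext y
    change φ (d' ((P.complex.d 2 1).hom y)) = 0
    have : d' ((P.complex.d 2 1).hom y) = 0 := by
      apply Subtype.ext
      exact congrArg (fun f => f.hom y) (P.complex.d_comp_d 2 1 0)
    rw [this, map_zero])
  let ψ' : P.complex.X 0 ⟶ ModuleCat.of R R := ψ
  have hψ' : P.complex.d 1 0 ≫ ψ' = ModuleCat.ofHom (φ ∘ₗ d') := hψ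
  refine ⟨ψ'.hom, ?_⟩
  intro x
  obtain ⟨y, hy⟩ := hex x.1 x.2
  have h1 : ψ'.hom ((P.complex.d 1 0).hom y) = φ (d' y) := congrArg (fun f => f.hom y) hψ'
  have h2 : d' y = x := Subtype.ext hy
  have h3 : (P.complex.d 1 0).hom y = x.1 := hy
  rw [h3, h2] at h1
  exact h1

lemma ext_extend (R : Type) [CommRing R] (N : Type) [AddCommGroup N] [Module R N]
    (h : Subsingleton (ExtGrp R N R 1)) {F : Type} [AddCommGroup F] [Module R F]
    [Module.Projective R F] (p : F →ₗ[R] N) (hp : Function.Surjective p)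
    (φ : LinearMap.ker p →ₗ[R] R) : ∃ ψ : F →ₗ[R] R, ∀ x : LinearMap.ker p, ψ x = φ x := by
  obtain ⟨P, q, hP, hq, hext⟩ := exists_presentation R N h
  obtain ⟨α, hα⟩ := Module.projective_lifting_property p q hp
  obtain ⟨β, hβ⟩ := Module.projective_lifting_property q p hq
  have hα' : ∀ x, p (α x) = q x := fun x => LinearMap.congr_fun hα x
  have hβ' : ∀ x, q (β x) = p x := fun x => LinearMap.congr_fun hβ x
  let α' : LinearMap.ker q →ₗ[R] LinearMap.ker p :=
    LinearMap.codRestrict _ (α ∘ₗ (LinearMap.ker q).subtype) (fun x => by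
      have := x.2
      simpa [hα'] using this)
  let γ : F →ₗ[R] LinearMap.ker p :=
    LinearMap.codRestrict _ (LinearMap.id - α ∘ₗ β) (fun x => by simp [hα', hβ'])
  obtain ⟨ψ, hψ⟩ := hext (φ ∘ₗ α')
  refine ⟨ψ ∘ₗ β + φ ∘ₗ γ, fun x => ?_⟩
  have hx : q (β x.1) = 0 := by rw [hβ']; exact x.2
  have h1 := hψ ⟨β x.1, hx⟩
  simp only [LinearMap.add_apply, LinearMap.comp_apply] at h1 ⊢
  rw [h1, ← map_add]
  congr 1
  apply Subtype.ext
  change α (β x.1) + (x.1 - α (β x.1)) = x.1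
  abel

end S8

namespace S8
open IsLocalRing

section
variable {R : Type} [CommRing R] [IsLocalRing R]

lemma exists_equiv_pi {V : Type} [AddCommGroup V] [Module R V] [Module.Finite R V]
    (h : ∀ a ∈ maximalIdeal R, ∀ v : V, a • v = 0) :
    ∃ n : ℕ, Nonempty (V ≃ₗ[R] (Fin n → ResidueField R)) := by
  have h' : Module.IsTorsionBySet R V (maximalIdeal R) := fun v a => h a.1 a.2 v
  let : Module (R ⧸ maximalIdeal R) V := h'.module
  let : Module (ResidueField R) V := h'.module
  have : IsScalarTower R (ResidueField R) V := h'.isScalarTower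
  have : Module.Finite (ResidueField R) V := Module.Finite.of_restrictScalars_finite R _ V
  exact ⟨_, ⟨(Module.finBasis (ResidueField R) V).equivFun.restrictScalars R⟩⟩

lemma length_residueField : Module.length R (ResidueField R) = 1 := by
  have : IsSimpleModule R (ResidueField R) :=
    isSimpleModule_iff_isCoatom.2 (maximalIdeal.isMaximal R).out
  exact Module.length_eq_one R _

lemma length_hom_pi (A : Type) [AddCommGroup A] [Module R A] (n : ℕ) :
    Module.length R ((Fin n → A) →ₗ[R] R) = n * Module.length R (A →ₗ[R] R) := by
  rw [← (LinearMap.lsum R (fun _ : Fin n => A) R (M := R)).length_eq, Module.length_pi]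
  simp

lemma length_hom_of_equiv {A B : Type} [AddCommGroup A] [Module R A] [AddCommGroup B] [Module R B]
    (e : A ≃ₗ[R] B) : Module.length R (A →ₗ[R] R) = Module.length R (B →ₗ[R] R) :=
  (e.congrLeft R R).length_eq

/-- the dual of a vector space -/
lemma length_hom_vs {V : Type} [AddCommGroup V] [Module R V] [Module.Finite R V]
    (h : ∀ a ∈ maximalIdeal R, ∀ v : V, a • v = 0) :
    Module.length R (V →ₗ[R] R) =
      Module.length R V * Module.length R (ResidueField R →ₗ[R] R) := by
  obtain ⟨n, ⟨e⟩⟩ := exists_equiv_pi h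
  rw [length_hom_of_equiv e, length_hom_pi, e.length_eq, Module.length_pi, length_residueField]
  simp

/-- length additivity of the dual -/
lemma length_hom_exact {B C : Type} [AddCommGroup B] [Module R B] [AddCommGroup C] [Module R C]
    (p : B →ₗ[R] C) (hp : Function.Surjective p)
    (hext : ∀ φ : LinearMap.ker p →ₗ[R] R, ∃ ψ : B →ₗ[R] R, ∀ x : LinearMap.ker p, ψ x = φ x) :
    Module.length R (B →ₗ[R] R) =
      Module.length R (C →ₗ[R] R) + Module.length R (LinearMap.ker p →ₗ[R] R) := by
  refine Module.length_eq_add_of_exact (LinearMap.lcomp R R p)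
    (LinearMap.lcomp R R (LinearMap.ker p).subtype) ?_ ?_ ?_
  · intro f g hfg
    ext c
    obtain ⟨b, rfl⟩ := hp c
    exact LinearMap.congr_fun hfg b
  · intro φ
    obtain ⟨ψ, hψ⟩ := hext φ
    exact ⟨ψ, LinearMap.ext hψ⟩
  · intro f
    constructor
    · intro hf
      have hk : LinearMap.ker p ≤ LinearMap.ker f := fun x hx => LinearMap.congr_fun hf ⟨x, hx⟩
      let e := p.quotKerEquivOfSurjective hp
      refine ⟨(LinearMap.ker p).liftQ f hk ∘ₗ e.symm.toLinearMap, ?_⟩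
      ext x
      have : e.symm (p x) = Submodule.Quotient.mk x := by
        rw [LinearEquiv.symm_apply_eq]; rfl
      simp [LinearMap.lcomp_apply, this]
    · rintro ⟨g, rfl⟩
      ext x
      have := x.2
      simp [LinearMap.lcomp_apply]

/-- the submodule `m N`. -/
abbrev mN (R : Type) [CommRing R] [IsLocalRing R] (N : Type) [AddCommGroup N] [Module R N] :
    Submodule R N := maximalIdeal R • (⊤ : Submodule R N)

lemma smul_quot {N : Type} [AddCommGroup N] [Module R N] :
    ∀ a ∈ maximalIdeal R, ∀ v : N ⧸ mN R N, a • v = 0 := by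
  intro a ha v
  obtain ⟨x, rfl⟩ := Submodule.Quotient.mk_surjective _ v
  rw [← Submodule.Quotient.mk_smul, Submodule.Quotient.mk_eq_zero]
  exact Submodule.smul_mem_smul ha trivial

/-- minimal free cover -/
lemma exists_cover (N : Type) [AddCommGroup N] [Module R N] [Module.Finite R N] :
    ∃ (n : ℕ) (x : Fin n → N), Module.length R (N ⧸ mN R N) = n ∧
      Function.Surjective (Fintype.linearCombination R x) ∧
      ∀ v : Fin n → R, Fintype.linearCombination R x v = 0 → ∀ i, v i ∈ maximalIdeal R := by
  obtain ⟨n, ⟨e⟩⟩ := exists_equiv_pi (R := R) (V := N ⧸ mN R N) smul_quot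
  have hx : ∀ i : Fin n, ∃ x : N, e (Submodule.Quotient.mk x) = Pi.single i 1 := by
    intro i
    obtain ⟨x, hx⟩ := Submodule.Quotient.mk_surjective _ (e.symm (Pi.single i 1))
    exact ⟨x, by rw [hx, e.apply_symm_apply]⟩
  choose x hx using hx
  have key : ∀ v : Fin n → R, e (Submodule.Quotient.mk (Fintype.linearCombination R x v)) =
      fun i => residue R (v i) := by
    intro v
    have : (Submodule.Quotient.mk (Fintype.linearCombination R x v) : N ⧸ mN R N) =
      (mN R N).mkQ (Fintype.linearCombination R x v) := rfl
    rw [this, Fintype.linearCombination_apply, map_sum, map_sum]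
    simp only [map_smul, Submodule.mkQ_apply, hx]
    ext i
    simp [Finset.sum_apply, Pi.single_apply, Algebra.smul_def]
  refine ⟨n, x, ?_, ?_, ?_⟩
  · rw [e.length_eq, Module.length_pi, length_residueField]; simp
  · rw [← LinearMap.range_eq_top]
    apply top_le_iff.1
    apply Submodule.le_of_le_smul_of_le_jacobson_bot (I := maximalIdeal R) Module.Finite.fg_top
    · rw [IsLocalRing.jacobson_eq_maximalIdeal _ bot_ne_top]
    · intro y _
      choose v hv using fun i => residue_surjective (e (Submodule.Quotient.mk y) i)
      have h1 : e (Submodule.Quotient.mk (Fintype.linearCombination R x v)) =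
        e (Submodule.Quotient.mk y) := by rw [key]; ext i; exact hv i
      have h2 := (Submodule.Quotient.eq _).1 (e.injective h1.symm)
      rw [← sub_add_cancel y (Fintype.linearCombination R x v)]
      exact add_mem (Submodule.mem_sup_right h2) (Submodule.mem_sup_left ⟨v, rfl⟩)
  · intro v hv i
    have := congrFun (key v) i
    rw [hv] at this
    rw [← residue_eq_zero_iff, ← this]
    simp

/-- Key count. -/
lemma length_count (N : Type) [AddCommGroup N] [Module R N] [Module.Finite R N]
    (hN : ∀ {F : Type} [AddCommGroup F] [Module R F]
      [Module.Projective R F] (p : F →ₗ[R] N) (_ : Function.Surjective p)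
      (φ : LinearMap.ker p →ₗ[R] R), ∃ ψ : F →ₗ[R] R, ∀ x : LinearMap.ker p, ψ x = φ x) :
    ∃ L : ℕ∞,
      Module.length R (N ⧸ mN R N) * Module.length R (R →ₗ[R] R) =
        Module.length R (N →ₗ[R] R) + L ∧
      Module.length R (N ⧸ mN R N) * Module.length R (maximalIdeal R →ₗ[R] R) =
        Module.length R (mN R N →ₗ[R] R) + L := by
  obtain ⟨n, x, hn, hsurj, hker⟩ := exists_cover (R := R) N
  set p := Fintype.linearCombination R x with hp
  let j : (Fin n → maximalIdeal R) →ₗ[R] (Fin n → R) :=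
    LinearMap.pi fun i => (maximalIdeal R).subtype ∘ₗ LinearMap.proj i
  have hjinj : Function.Injective j := by
    intro u v huv
    ext i
    exact congrFun huv i
  have hj : ∀ u, p (j u) ∈ mN R N := by
    intro u
    rw [hp, Fintype.linearCombination_apply]
    exact Submodule.sum_mem _ fun i _ => Submodule.smul_mem_smul (u i).2 trivial
  let p' : (Fin n → maximalIdeal R) →ₗ[R] mN R N := LinearMap.codRestrict _ (p ∘ₗ j) hj
  have hp' : ∀ u, (p' u : N) = p (j u) := fun u => rfl
  have hsurj' : Function.Surjective p' := by
    have : ∀ y ∈ mN R N, ∃ u, p (j u) = y := by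
      intro y hy
      refine Submodule.smul_induction_on hy ?_ ?_
      · intro a ha z _
        obtain ⟨v, rfl⟩ := hsurj z
        refine ⟨fun i => ⟨a * v i, Ideal.mul_mem_right _ _ ha⟩, ?_⟩
        rw [← map_smul]
        congr 1
      · rintro _ _ ⟨u, rfl⟩ ⟨v, rfl⟩
        exact ⟨u + v, by simp⟩
    intro y
    obtain ⟨u, hu⟩ := this y.1 y.2
    exact ⟨u, Subtype.ext hu⟩
  let jk : LinearMap.ker p' →ₗ[R] LinearMap.ker p :=
    LinearMap.codRestrict _ (j ∘ₗ (LinearMap.ker p').subtype) (fun u => by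
      have := congrArg Subtype.val (LinearMap.mem_ker.1 u.2)
      exact this)
  have hjk : Function.Bijective jk := by
    constructor
    · intro u v huv
      exact Subtype.ext (hjinj (congrArg Subtype.val huv))
    · intro v
      have hv := hker v.1 v.2
      refine ⟨⟨fun i => ⟨v.1 i, hv i⟩, ?_⟩, ?_⟩
      · exact Subtype.ext v.2
      · rfl
  let e : LinearMap.ker p' ≃ₗ[R] LinearMap.ker p := LinearEquiv.ofBijective jk hjk
  refine ⟨Module.length R (LinearMap.ker p →ₗ[R] R), ?_, ?_⟩
  · rw [hn, ← length_hom_pi]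
    exact length_hom_exact p hsurj (hN p hsurj)
  · rw [hn, ← length_hom_pi, ← length_hom_of_equiv e]
    refine length_hom_exact p' hsurj' ?_
    intro φ
    obtain ⟨ψ, hψ⟩ := hN p hsurj (φ ∘ₗ e.symm.toLinearMap)
    refine ⟨ψ ∘ₗ j, fun u => ?_⟩
    have := hψ (e u)
    simp only [LinearMap.comp_apply, LinearEquiv.coe_coe, LinearEquiv.symm_apply_apply] at this
    exact this

/-- Length of `N*`. -/
lemma length_dual (N : Type) [AddCommGroup N] [Module R N] [Module.Finite R N]
    (h1 : ∀ f ∈ mN R (Module.Dual R N), ∀ x ∈ mN R N, f x = 0)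
    (h2 : ∀ f : Module.Dual R N, (∀ a ∈ maximalIdeal R, a • f = 0) → f ∈ mN R (Module.Dual R N)) :
    Module.length R (mN R (Module.Dual R N)) =
      Module.length R (N ⧸ mN R N) * Module.length R (ResidueField R →ₗ[R] R) := by
  rw [← length_hom_vs smul_quot]
  symm
  have hmem : ∀ g : (N ⧸ mN R N) →ₗ[R] R, g ∘ₗ (mN R N).mkQ ∈ mN R (Module.Dual R N) := by
    intro g
    apply h2
    intro a ha
    ext x
    change a • g ((mN R N).mkQ x) = 0
    rw [← map_smul, Submodule.mkQ_apply, smul_quot a ha, map_zero]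
  let T : ((N ⧸ mN R N) →ₗ[R] R) →ₗ[R] mN R (Module.Dual R N) :=
    LinearMap.codRestrict _ (LinearMap.lcomp R R (mN R N).mkQ) hmem
  refine (LinearEquiv.ofBijective T ⟨?_, ?_⟩).length_eq
  · intro f g hfg
    ext x
    exact LinearMap.congr_fun (congrArg Subtype.val hfg) x
  · intro f
    refine ⟨(mN R N).liftQ f.1 (fun x hx => h1 f.1 f.2 x hx), ?_⟩
    apply Subtype.ext
    ext x
    rfl

lemma length_add (N : Type) [AddCommGroup N] [Module R N] (S : Submodule R N) :
    Module.length R N = Module.length R S + Module.length R (N ⧸ S) :=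
  Module.length_eq_add_of_exact S.subtype S.mkQ S.injective_subtype S.mkQ_surjective
    (LinearMap.exact_subtype_mkQ S)
end
end S8

namespace S8
open IsLocalRing

section
variable {R : Type} [CommRing R] [IsLocalRing R]

lemma exists_retract {N : Type} [AddCommGroup N] [Module R N] [Module.Finite R N]
    (x : N) (hx : x ∉ mN R N) : ∃ φ : N →ₗ[R] ResidueField R, φ x = 1 := by
  obtain ⟨n, ⟨e⟩⟩ := exists_equiv_pi (R := R) (V := N ⧸ mN R N) smul_quot
  have hne : e (Submodule.Quotient.mk x) ≠ 0 := by
    intro h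
    rw [LinearEquiv.map_eq_zero_iff, Submodule.Quotient.mk_eq_zero] at h
    exact hx h
  obtain ⟨i, hi⟩ := Function.ne_iff.1 hne
  refine ⟨LinearMap.mulLeft R (e (Submodule.Quotient.mk x) i)⁻¹ ∘ₗ LinearMap.proj i ∘ₗ
    e.toLinearMap ∘ₗ (mN R N).mkQ, ?_⟩
  exact inv_mul_cancel₀ hi

lemma residue_smul_one (a : R) : a • (1 : ResidueField R) = residue R a := by
  rw [Algebra.smul_def, mul_one]; rfl

lemma equiv_residueField {M : Type} [AddCommGroup M] [Module R M] [Module.Finite R M]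
    (hind : IsIndecomposableModule R M) (x : M) (hx0 : ∀ a ∈ maximalIdeal R, a • x = 0)
    (hx : x ∉ mN R M) : Nonempty (M ≃ₗ[R] ResidueField R) := by
  obtain ⟨φ, hφ⟩ := exists_retract x hx
  have hc : IsCompl (Submodule.span R {x}) (LinearMap.ker φ) := by
    constructor
    · rw [Submodule.disjoint_def]
      intro y hy hy'
      obtain ⟨a, rfl⟩ := Submodule.mem_span_singleton.1 hy
      rw [LinearMap.mem_ker, map_smul, hφ, residue_smul_one, residue_eq_zero_iff] at hy'
      exact hx0 a hy'
    · rw [codisjoint_iff_le_sup]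
      intro y _
      obtain ⟨a, ha⟩ := residue_surjective (φ y)
      rw [← add_sub_cancel (a • x) y]
      refine Submodule.add_mem_sup (Submodule.smul_mem _ _ (Submodule.mem_span_singleton_self x)) ?_
      rw [LinearMap.mem_ker, map_sub, map_smul, hφ, residue_smul_one, ha, sub_self]
  rcases hind.2 _ _ hc with h | h
  · exfalso
    apply hx
    rw [Submodule.span_singleton_eq_bot] at h
    rw [h]
    exact zero_mem _
  · refine ⟨LinearEquiv.ofBijective φ ⟨LinearMap.ker_eq_bot.1 h, fun z => ?_⟩⟩
    obtain ⟨a, ha⟩ := residue_surjective z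
    exact ⟨a • x, by rw [map_smul, hφ, residue_smul_one, ha]⟩

lemma dual_mem {M : Type} [AddCommGroup M] [Module R M]
    (hind : IsIndecomposableModule R M) (hnf : ¬ Module.Free R M) (f : Module.Dual R M) (x : M) :
    f x ∈ maximalIdeal R := by
  by_contra hfx
  rw [mem_maximalIdeal, mem_nonunits_iff, not_not] at hfx
  obtain ⟨u, hu⟩ := hfx
  have hy : f ((↑u⁻¹ : R) • x) = 1 := by rw [map_smul, ← hu, smul_eq_mul, Units.inv_mul]
  generalize (↑u⁻¹ : R) • x = y at hy
  have hc : IsCompl (Submodule.span R {y}) (LinearMap.ker f) := by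
    constructor
    · rw [Submodule.disjoint_def]
      intro z hz hz'
      obtain ⟨a, rfl⟩ := Submodule.mem_span_singleton.1 hz
      rw [LinearMap.mem_ker, map_smul, hy, smul_eq_mul, mul_one] at hz'
      rw [hz', zero_smul]
    · rw [codisjoint_iff_le_sup]
      intro z _
      rw [← add_sub_cancel (f z • y) z]
      refine Submodule.add_mem_sup (Submodule.smul_mem _ _ (Submodule.mem_span_singleton_self y)) ?_
      rw [LinearMap.mem_ker, map_sub, map_smul, hy, smul_eq_mul, mul_one, sub_self]
  rcases hind.2 _ _ hc with h | h
  · rw [Submodule.span_singleton_eq_bot] at h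
    rw [h, map_zero] at hy
    exact zero_ne_one hy
  · apply hnf
    refine Module.Free.of_equiv
      (LinearEquiv.ofBijective f ⟨LinearMap.ker_eq_bot.1 h, fun z => ?_⟩).symm
    exact ⟨z • y, by rw [map_smul, hy, smul_eq_mul, mul_one]⟩

/-- The final arithmetic. -/
lemma arith (r b c s t L L' : ℕ) (h1 : b * s = (r * b + c) + L) (h2 : b * t = r * (r * c) + L)
    (h3 : c * s = (r * c + b) + L') (h4 : c * t = r * (r * b) + L') :
    r * b + c = r * c + b := by
  zify at *
  have e1 : (b : ℤ) * (s - t + r ^ 2 + r) = (b : ℤ) * (r^2 + 2 * r) + c * (1 - r ^ 2) := by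
    linear_combination h1 - h2
  have e2 : (c : ℤ) * (s - t + r ^ 2 + r) = (c : ℤ) * (r^2 + 2 * r) + b * (1 - r ^ 2) := by
    linear_combination h3 - h4
  have e3 : (1 - (r : ℤ) ^ 2) * ((c : ℤ) - b) * (c + b) = 0 := by
    linear_combination (b : ℤ) * e2 - c * e1
  have : ((r : ℤ) - 1) * (c - b) = 0 := by
    rcases mul_eq_zero.1 e3 with h | h
    · have : (1 + (r : ℤ)) * ((r - 1) * (c - b)) = 0 := by linear_combination -h
      rcases mul_eq_zero.1 this with h | h
      · omega
      · exact h
    · have hb : (c : ℤ) - b = 0 := by omega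
      rw [hb, mul_zero]
  linear_combination -this
end
end S8

open IsLocalRing S8

/-- ℓ(M*) = ℓ(M). -/
theorem stmt_8 (R : Type) [CommRing R] [IsNoetherianRing R] [IsLocalRing R]
    (hng : ¬ IsGorensteinLocalRing R)
    (hm3 : (IsLocalRing.maximalIdeal R) ^ 3 = ⊥)
    (hm2 : (IsLocalRing.maximalIdeal R) ^ 2 ≠ ⊥)
    (M : Type) [AddCommGroup M] [Module R M] [Module.Finite R M]
    (hind : IsIndecomposableModule R M) (hnf : ¬ Module.Free R M)
    (hG : GDimZero R M) :
    mlength R (Module.Dual R M) = mlength R M := by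
  classical
  obtain ⟨hrefl, hext, hext'⟩ := hG
  have hart : IsArtinianRing R :=
    (isArtinianRing_iff_isNilpotent_maximalIdeal R).2 ⟨3, hm3⟩
  have hfin : Module.Finite R (Module.Dual R M) := inferInstance
  have hbid : Module.Finite R (Module.Dual R (Module.Dual R M)) := inferInstance
  let ev : M ≃ₗ[R] Module.Dual R (Module.Dual R M) :=
    LinearEquiv.ofBijective (Module.Dual.eval R M) hrefl
  have hev : ∀ x f, ev x f = f x := fun x f => rfl
  set r := Module.length R (ResidueField R →ₗ[R] R) with hr
  suffices hgoal : Module.length R (Module.Dual R M) = Module.length R M by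
    rw [mlength, mlength, ← Module.coe_length, ← Module.coe_length, hgoal]
  by_cases hk : Nonempty (M ≃ₗ[R] ResidueField R)
  · obtain ⟨e⟩ := hk
    have hM : Module.length R M = 1 := by rw [e.length_eq, length_residueField]
    have hMk : ∀ a ∈ maximalIdeal R, ∀ v : M, a • v = 0 := by
      intro a ha v
      apply e.injective
      rw [map_smul, map_zero]
      have : a • e v = residue R a * e v := Algebra.smul_def _ _
      rw [this, (residue_eq_zero_iff a).2 ha, zero_mul]
    have hd := length_hom_vs hMk
    have hMk' : ∀ a ∈ maximalIdeal R, ∀ v : Module.Dual R M, a • v = 0 := by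
      intro a ha v
      ext x
      change a • v x = 0
      rw [← map_smul, hMk a ha, map_zero]
    have hd' := length_hom_vs (R := R) (V := Module.Dual R M) hMk'
    rw [← hr, hM, one_mul] at hd
    have hd1 : Module.length R (Module.Dual R M) = r := hd
    have hd2 : Module.length R (Module.Dual R (Module.Dual R M)) = r * r := by
      rw [← hd1]; rw [hd1] at hd' ⊢; exact hd'
    rw [← ev.length_eq, hM] at hd2
    rw [hd1, hM]
    exact eq_one_of_mul_right hd2.symm
  -- the main case
  have hsoc : ∀ x : M, (∀ a ∈ maximalIdeal R, a • x = 0) → x ∈ mN R M := by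
    intro x hx
    by_contra hx'
    exact hk (equiv_residueField hind x hx hx')
  have hmem := dual_mem hind hnf
  have h3 : ∀ a ∈ maximalIdeal R, ∀ b ∈ maximalIdeal R, ∀ c ∈ maximalIdeal R, a * (b * c) = 0 := by
    intro a ha b hb c hc
    have : a * (b * c) ∈ maximalIdeal R ^ 3 := by
      rw [pow_succ', pow_two]
      exact Ideal.mul_mem_mul ha (Ideal.mul_mem_mul hb hc)
    rw [hm3] at this
    exact this
  -- m^2 M = 0
  have hpair : ∀ f ∈ mN R (Module.Dual R M), ∀ x ∈ mN R M, f x = 0 := by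
    intro f hf x hx
    refine Submodule.smul_induction_on hf ?_ ?_
    · intro a ha g _
      refine Submodule.smul_induction_on hx ?_ ?_
      · intro b hb y _
        change a • g (b • y) = 0
        rw [map_smul, smul_eq_mul, smul_eq_mul]
        exact h3 a ha b hb _ (hmem g y)
      · intro y z hy hz
        rw [map_add, hy, hz, add_zero]
    · intro g h hg hh
      rw [LinearMap.add_apply, hg, hh, add_zero]
  have hmM : ∀ a ∈ maximalIdeal R, ∀ x ∈ mN R M, a • x = 0 := by
    intro a ha x hx
    apply ev.injective
    ext f
    rw [map_zero, hev, map_smul]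
    exact hpair (a • f) (Submodule.smul_mem_smul ha trivial) x hx
  have hmD : ∀ a ∈ maximalIdeal R, ∀ f ∈ mN R (Module.Dual R M), a • f = 0 := by
    intro a ha f hf
    ext x
    change a • f x = 0
    rw [← map_smul]
    exact hpair f hf (a • x) (Submodule.smul_mem_smul ha trivial)
  -- socle of the dual
  have hsocD : ∀ f : Module.Dual R M, (∀ a ∈ maximalIdeal R, a • f = 0) →
      f ∈ mN R (Module.Dual R M) := by
    intro f hf
    by_contra hf'
    obtain ⟨φ, hφ⟩ := exists_retract f hf'
    obtain ⟨s, hs, hs0⟩ := Submodule.exists_mem_ne_zero_of_ne_bot hm2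
    have hms : ∀ a ∈ maximalIdeal R, a * s = 0 := by
      intro a ha
      have : a * s ∈ maximalIdeal R ^ 3 := by
        rw [pow_succ']
        exact Ideal.mul_mem_mul ha hs
      rw [hm3] at this
      exact this
    let σ : ResidueField R →ₗ[R] R :=
      Submodule.liftQ (maximalIdeal R) (LinearMap.toSpanSingleton R R s) (fun a ha => by
        rw [LinearMap.mem_ker, LinearMap.toSpanSingleton_apply]
        exact hms a ha)
    have hσ : σ 1 = s := by
      have : σ 1 = (1 : R) • s := rfl
      rw [this, one_smul]
    obtain ⟨x, hx⟩ := ev.surjective (σ ∘ₗ φ)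
    have hfx : f x = s := by
      rw [← hev, hx, LinearMap.comp_apply, hφ, hσ]
    have hxm : x ∈ mN R M := by
      apply hsoc
      intro a ha
      apply ev.injective
      rw [map_smul, hx, map_zero]
      ext g
      change a • σ (φ g) = 0
      have h0 : a • φ g = residue R a * φ g := Algebra.smul_def _ _
      rw [← map_smul, h0, (residue_eq_zero_iff a).2 ha, zero_mul, map_zero]
    have hzero : ∀ y ∈ mN R M, f y = 0 := by
      intro y hy
      refine Submodule.smul_induction_on hy ?_ ?_
      · intro a ha z _
        rw [map_smul]
        exact LinearMap.congr_fun (hf a ha) z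
      · intro y z hy hz
        rw [map_add, hy, hz, add_zero]
    exact hs0 (by rw [← hfx, hzero x hxm])
  -- transport along ev
  have hmap : (mN R M).map ev.toLinearMap = mN R (Module.Dual R (Module.Dual R M)) := by
    rw [mN, Submodule.map_smul'', Submodule.map_top, LinearEquiv.range]
  have hmem_ev : ∀ x, ev x ∈ mN R (Module.Dual R (Module.Dual R M)) ↔ x ∈ mN R M := by
    intro x
    rw [← hmap]
    constructor
    · rintro ⟨y, hy, hxy⟩
      rwa [← ev.injective hxy]
    · intro hx
      exact ⟨x, hx, rfl⟩
  have hA := length_dual M hpair hsocD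
  have hA' := length_dual (Module.Dual R M)
    (by
      intro F hF f hf
      obtain ⟨x, rfl⟩ := ev.surjective F
      rw [hev]
      exact hpair f hf x ((hmem_ev x).1 hF))
    (by
      intro F hF
      obtain ⟨x, rfl⟩ := ev.surjective F
      rw [hmem_ev]
      apply hsoc
      intro a ha
      apply ev.injective
      rw [map_smul, map_zero]
      exact hF a ha)
  have hlen : Module.length R (mN R (Module.Dual R (Module.Dual R M))) =
      Module.length R (mN R M) := by
    rw [← hmap]
    exact ((ev.submoduleMap (mN R M)).length_eq).symm
  rw [hlen] at hA'
  obtain ⟨L, hB1, hB2⟩ := length_count M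
    (fun p hp φ => ext_extend R M (hext 1 one_pos) p hp φ)
  obtain ⟨L', hB3, hB4⟩ := length_count (Module.Dual R M)
    (fun p hp φ => ext_extend R (Module.Dual R M) (hext' 1 one_pos) p hp φ)
  have hV := length_hom_vs (R := R) (V := mN R M) (fun a ha v => Subtype.ext (hmM a ha v.1 v.2))
  have hV' := length_hom_vs (R := R) (V := mN R (Module.Dual R M))
    (fun a ha v => Subtype.ext (hmD a ha v.1 v.2))
  have hDD : Module.length R (Module.Dual R M →ₗ[R] R) = Module.length R M := ev.length_eq.symm
  have hD : Module.length R (M →ₗ[R] R) = Module.length R (Module.Dual R M) := rfl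
  have hsum := length_add M (mN R M)
  have hsumD := length_add (Module.Dual R M) (mN R (Module.Dual R M))
  rw [hV, hA'] at hB2
  rw [hV', hA] at hB4
  rw [hD, hsumD, hA] at hB1
  rw [hDD, hsum, hA'] at hB3
  rw [hsum, hsumD, hA, hA']
  rw [← hr] at *
  have fr : r ≠ ⊤ := Module.length_ne_top
  have fb : Module.length R (M ⧸ mN R M) ≠ ⊤ := Module.length_ne_top
  have fc : Module.length R (Module.Dual R M ⧸ mN R (Module.Dual R M)) ≠ ⊤ := Module.length_ne_top
  have fs : Module.length R (R →ₗ[R] R) ≠ ⊤ := Module.length_ne_top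
  have ft : Module.length R (maximalIdeal R →ₗ[R] R) ≠ ⊤ := Module.length_ne_top
  generalize Module.length R (M ⧸ mN R M) = b at *
  generalize Module.length R (Module.Dual R M ⧸ mN R (Module.Dual R M)) = c at *
  generalize Module.length R (R →ₗ[R] R) = s at *
  generalize Module.length R (maximalIdeal R →ₗ[R] R) = t at *
  clear_value r
  have fL : L ≠ ⊤ := by
    rintro rfl
    rw [add_top] at hB1
    exact (WithTop.mul_ne_top fb fs) hB1
  have fL' : L' ≠ ⊤ := by
    rintro rfl
    rw [add_top] at hB3
    exact (WithTop.mul_ne_top fc fs) hB3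
  lift r to ℕ using fr
  lift b to ℕ using fb
  lift c to ℕ using fc
  lift s to ℕ using fs
  lift t to ℕ using ft
  lift L to ℕ using fL
  lift L' to ℕ using fL'
  norm_cast at hB1 hB2 hB3 hB4 ⊢
  have := arith r b c s t L L' (by linarith) (by linarith) (by linarith) (by linarith)
  linarith
end

section
/- Let (R,m) be a non-Gorenstein Noetherian local ring with m³ = (0), m² ≠ (0), type r, and suppose M is a nonfree indecomposable finitely generated R-module of G-dimension zero. Then dim_k Ext¹_R(k,R) = r² − 1, where k = R/m. -/
open CategoryTheory

section ExtConcrete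
open CategoryTheory

variable (R : Type) [CommRing R]

lemma ext_data (N : Type) [AddCommGroup N] [Module R N] :
    ∃ (X : ℕ → ModuleCat.{0} R) (d : ∀ n, X (n+1) →ₗ[R] X n) (π : X 0 →ₗ[R] N),
      (∀ n, Module.Projective R (X n)) ∧ Function.Surjective π ∧ Function.Exact (d 0) π ∧
      (∀ n, Function.Exact (d (n+1)) (d n)) ∧
      ∀ (L : Type) [AddCommGroup L] [Module R L] (n : ℕ),
        ∃ Θ : LinearMap.ker (LinearMap.lcomp R L (d (n+1))) →ₗ[R] ExtGrp R N L (n+1),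
          Function.Surjective Θ ∧ ∀ h, Θ h = 0 ↔ ∃ g, LinearMap.lcomp R L (d n) g = h.1 := by
  let P := projectiveResolution (ModuleCat.of R N)
  refine ⟨fun n => P.complex.X n, fun n => (P.complex.d (n+1) n).hom, (P.π.f 0).hom,
    ?_, ?_, ?_, ?_, ?_⟩
  · intro n
    have := P.projective n
    exact (IsProjective.iff_projective (R := R) _).2 this
  · exact (ModuleCat.epi_iff_surjective (P.π.f 0)).1 inferInstance
  · have := P.exact₀
    rw [ShortComplex.ShortExact.moduleCat_exact_iff_function_exact] at this
    exact this
  · intro n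
    have := P.exact_succ n
    rw [ShortComplex.ShortExact.moduleCat_exact_iff_function_exact] at this
    exact this
  · intro L _ _ n
    let K := P.complex.linearYonedaObj R (ModuleCat.of R L)
    let e1 := P.isoExt (R := R) (n+1) (ModuleCat.of R L)
    let S := K.sc' n (n+1) (n+2)
    let e2 : K.homology (n+1) ≅ S.homology :=
      ShortComplex.homologyMapIso (K.isoSc' n (n+1) (n+2) (by simp) (by simp))
    let e := e1 ≪≫ e2 ≪≫ S.moduleCatHomologyIso
    have hg : ∀ h : P.complex.X (n+1) ⟶ ModuleCat.of R L, 
      S.g.hom h = P.complex.d (n+2) (n+1) ≫ h := fun h => rfl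
    have hf : ∀ h : P.complex.X n ⟶ ModuleCat.of R L, 
      S.f.hom h = P.complex.d (n+1) n ≫ h := fun h => rfl
    let ψ : LinearMap.ker (LinearMap.lcomp R L (P.complex.d (n+2) (n+1)).hom) →ₗ[R]
        LinearMap.ker S.g.hom :=
      { toFun := fun h => ⟨ModuleCat.ofHom h.1, by
          show P.complex.d (n+2) (n+1) ≫ ModuleCat.ofHom h.1 = 0
          ext x
          exact LinearMap.congr_fun h.2 x⟩
        map_add' := fun _ _ => rfl
        map_smul' := fun _ _ => rfl }
    let φ : LinearMap.ker (LinearMap.lcomp R L (P.complex.d (n+2) (n+1)).hom) →ₗ[R]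
        S.moduleCatLeftHomologyData.H := (LinearMap.range S.moduleCatToCycles).mkQ ∘ₗ ψ
    refine ⟨e.toLinearEquiv.symm.toLinearMap ∘ₗ φ, ?_, ?_⟩
    · refine e.toLinearEquiv.symm.surjective.comp ?_
      refine (Submodule.mkQ_surjective _).comp ?_
      intro h
      refine ⟨⟨ModuleCat.Hom.hom (show P.complex.X (n+1) ⟶ ModuleCat.of R L from h.1), ?_⟩, ?_⟩
      · have := h.2
        exact congrArg ModuleCat.Hom.hom
          (show P.complex.d (n+2) (n+1) ≫
            (show P.complex.X (n+1) ⟶ ModuleCat.of R L from h.1) = 0 from this)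
      · rfl
    · intro h
      have : (e.toLinearEquiv.symm.toLinearMap ∘ₗ φ) h = 0 ↔ φ h = 0 := by
        simp only [LinearMap.comp_apply]
        exact e.toLinearEquiv.symm.map_eq_zero_iff
      rw [this]
      have h2 : φ h = 0 ↔ ψ h ∈ LinearMap.range S.moduleCatToCycles :=
        Submodule.Quotient.mk_eq_zero _
      rw [h2]
      constructor
      · rintro ⟨g, hg'⟩
        refine ⟨ModuleCat.Hom.hom (show P.complex.X n ⟶ ModuleCat.of R L from g), ?_⟩
        have := congrArg Subtype.val hg'
        exact congrArg ModuleCat.Hom.hom 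
          (show P.complex.d (n+1) n ≫ (show P.complex.X n ⟶ ModuleCat.of R L from g) 
            = ModuleCat.ofHom h.1 from this)
      · rintro ⟨g, hg'⟩
        refine ⟨ModuleCat.ofHom g, ?_⟩
        apply Subtype.ext
        show P.complex.d (n+1) n ≫ ModuleCat.ofHom g = ModuleCat.ofHom h.1
        ext x
        exact LinearMap.congr_fun hg' x

end ExtConcrete

section ExtOne

variable {R : Type} [CommRing R]

lemma pushout_extend {B C P L : Type*} [AddCommGroup B] [AddCommGroup C] [AddCommGroup P]
    [AddCommGroup L] [Module R B] [Module R C] [Module R P] [Module R L]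
    (p : B →ₗ[R] C) (q : P →ₗ[R] C) (hq : Function.Surjective q) (s : P →ₗ[R] B)
    (hs : ∀ x, p (s x) = q x) (f : LinearMap.ker p →ₗ[R] L) (g : P →ₗ[R] L)
    (hfg : ∀ x (y : LinearMap.ker p), q x = 0 → s x = y.1 → g x = f y) :
    ∃ F : B →ₗ[R] L, ∀ a : LinearMap.ker p, F a = f a := by
  let T : (LinearMap.ker p × P) →ₗ[R] B := LinearMap.coprod (LinearMap.ker p).subtype s
  let G : (LinearMap.ker p × P) →ₗ[R] L := LinearMap.coprod f g
  have hT : Function.Surjective T := by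
    intro b
    obtain ⟨x, hx⟩ := hq (p b)
    refine ⟨(⟨b - s x, by simp [hs, hx]⟩, x), ?_⟩
    simp [T]
  have hle : LinearMap.ker T ≤ LinearMap.ker G := by
    rintro ⟨a, x⟩ h
    have h1 : a.1 + s x = 0 := by simpa [T] using h
    have h2 : s x = (-a).1 := by
      rw [Submodule.coe_neg]; exact (neg_eq_of_add_eq_zero_right h1).symm
    have h3 : q x = 0 := by
      rw [← hs, h2]; exact (-a).2
    have := hfg x (-a) h3 h2
    simp [G, this]
  refine ⟨(LinearMap.ker T).liftQ G hle ∘ₗ (T.quotKerEquivOfSurjective hT).symm.toLinearMap, ?_⟩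
  intro a
  have : (T.quotKerEquivOfSurjective hT).symm a.1 = Submodule.Quotient.mk (a, (0 : P)) := by
    rw [LinearEquiv.symm_apply_eq]
    simp [T]
  simp [this, G]

lemma ext_one_equiv (N L F : Type) [AddCommGroup N] [Module R N] [AddCommGroup L] [Module R L]
    [AddCommGroup F] [Module R F] [Module.Projective R F] (q : F →ₗ[R] N)
    (hq : Function.Surjective q) :
    Nonempty (((LinearMap.ker q →ₗ[R] L) ⧸
      LinearMap.range (LinearMap.lcomp R L (LinearMap.ker q).subtype)) ≃ₗ[R] ExtGrp R N L 1) := by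
  obtain ⟨X, d, π, hX, hπ, hd0, hd, H⟩ := ext_data R N
  obtain ⟨Θ, hΘ, hΘ0⟩ := H L 0
  have := hX 0
  obtain ⟨s, hs⟩ := Module.projective_lifting_property q π hq
  obtain ⟨t, ht⟩ := Module.projective_lifting_property π q hπ
  have hs' : ∀ x, q (s x) = π x := LinearMap.congr_fun hs
  have ht' : ∀ x, π (t x) = q x := LinearMap.congr_fun ht
  let σ : X 1 →ₗ[R] LinearMap.ker q := LinearMap.codRestrict _ (s ∘ₗ d 0) (by
    intro x
    simp [hs', hd0.apply_apply_eq_zero])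
  have hσ : ∀ x, ((σ x : LinearMap.ker q) : F) = s (d 0 x) := fun x => rfl
  let Φ : (LinearMap.ker q →ₗ[R] L) →ₗ[R] LinearMap.ker (LinearMap.lcomp R L (d 1)) :=
    LinearMap.codRestrict _ (LinearMap.lcomp R L σ) (by
      intro h
      rw [LinearMap.mem_ker]
      ext x
      have : σ (d 1 x) = 0 := by
        apply Subtype.ext
        simp [hσ, (hd 0).apply_apply_eq_zero]
      simp [this])
  have hΦ : ∀ h x, (Φ h).1 x = h (σ x) := fun h x => rfl
  let Ψ := Θ ∘ₗ Φ
  have hsurj : Function.Surjective Ψ := by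
    intro y
    obtain ⟨h1, rfl⟩ := hΘ y
    let δ : X 1 →ₗ[R] LinearMap.ker π := LinearMap.codRestrict _ (d 0) hd0.apply_apply_eq_zero
    have hδ : Function.Surjective δ := by
      rintro ⟨z, hz⟩
      obtain ⟨w, hw⟩ := (hd0 z).1 hz
      exact ⟨w, Subtype.ext hw⟩
    have hle : LinearMap.ker δ ≤ LinearMap.ker h1.1 := by
      intro x hx
      have hx' : d 0 x = 0 := congrArg Subtype.val hx
      obtain ⟨w, rfl⟩ := (hd 0 x).1 hx'
      exact LinearMap.congr_fun h1.2 w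
    let h : LinearMap.ker π →ₗ[R] L :=
      (LinearMap.ker δ).liftQ h1.1 hle ∘ₗ (δ.quotKerEquivOfSurjective hδ).symm.toLinearMap
    have hh : ∀ x, h (δ x) = h1.1 x := by
      intro x
      have : (δ.quotKerEquivOfSurjective hδ).symm (δ x) = Submodule.Quotient.mk x := by
        rw [LinearEquiv.symm_apply_eq]; simp
      simp [h, this]
    let tK : LinearMap.ker q →ₗ[R] LinearMap.ker π :=
      t.restrict (fun x hx => by simpa [ht'] using hx)
    refine ⟨h ∘ₗ tK, ?_⟩
    let u : X 0 →ₗ[R] LinearMap.ker π := LinearMap.codRestrict _ (t ∘ₗ s - LinearMap.id) (by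
      intro x; simp [ht', hs'])
    have : Θ (Φ (h ∘ₗ tK) - h1) = 0 := by
      rw [hΘ0]
      refine ⟨h ∘ₗ u, ?_⟩
      ext x
      have e1 : u (d 0 x) = tK (σ x) - δ x := by
        apply Subtype.ext
        rfl
      show h (u (d 0 x)) = h (tK (σ x)) - h1.1 x
      rw [e1, map_sub, hh]
    rw [map_sub, sub_eq_zero] at this
    exact this
  have hker : LinearMap.ker Ψ = LinearMap.range (LinearMap.lcomp R L (LinearMap.ker q).subtype) := by
    ext f
    rw [LinearMap.mem_ker]
    show Θ (Φ f) = 0 ↔ _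
    rw [hΘ0]
    constructor
    · rintro ⟨g, hg⟩
      have hg' : ∀ x, g (d 0 x) = f (σ x) := LinearMap.congr_fun hg
      obtain ⟨G, hG⟩ := pushout_extend q π hπ s hs' f g (by
        intro x y hx hy
        obtain ⟨w, rfl⟩ := (hd0 x).1 hx
        rw [hg']
        congr 1
        exact Subtype.ext hy)
      exact ⟨G, LinearMap.ext hG⟩
    · rintro ⟨G, rfl⟩
      exact ⟨G ∘ₗ s, rfl⟩
  exact ⟨(Submodule.quotEquivOfEq _ _ hker.symm).trans (Ψ.quotKerEquivOfSurjective hsurj)⟩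

lemma ext_one_extend {N L F : Type} [AddCommGroup N] [Module R N] [AddCommGroup L] [Module R L]
    [AddCommGroup F] [Module R F] [Module.Projective R F] (q : F →ₗ[R] N)
    (hq : Function.Surjective q) (h : Subsingleton (ExtGrp R N L 1)) :
    Function.Surjective (LinearMap.lcomp R L (LinearMap.ker q).subtype) := by
  obtain ⟨e⟩ := ext_one_equiv N L F q hq
  have := e.toEquiv.subsingleton
  rw [Submodule.Quotient.subsingleton_iff] at this
  exact LinearMap.range_eq_top.1 this

lemma ext_of_injective (N L : Type) [AddCommGroup N] [Module R N] [AddCommGroup L] [Module R L]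
    (hL : Module.Injective R L) (n : ℕ) : Subsingleton (ExtGrp R N L (n+1)) := by
  obtain ⟨X, d, π, hX, hπ, hd0, hd, H⟩ := ext_data R N
  obtain ⟨Θ, hΘ, hΘ0⟩ := H L n
  refine subsingleton_of_forall_eq 0 (fun y => ?_)
  obtain ⟨h, rfl⟩ := hΘ y
  rw [hΘ0]
  have hle : LinearMap.ker (d n) ≤ LinearMap.ker h.1 := by
    intro x hx
    obtain ⟨w, rfl⟩ := (hd n x).1 hx
    exact LinearMap.congr_fun h.2 w
  let i : (X (n+1) ⧸ LinearMap.ker (d n)) →ₗ[R] X n := (LinearMap.ker (d n)).liftQ (d n) le_rfl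
  have hi : Function.Injective i := by
    rw [← LinearMap.ker_eq_bot]
    exact Submodule.ker_liftQ_eq_bot _ _ _ le_rfl
  obtain ⟨g, hg⟩ := hL.out i hi ((LinearMap.ker (d n)).liftQ h.1 hle)
  refine ⟨g, ?_⟩
  ext x
  exact hg (Submodule.Quotient.mk x)

end ExtOne

section LocalPart
open IsLocalRing CategoryTheory

variable {R : Type} [CommRing R] [IsLocalRing R]

lemma selfInjective_of_extend [IsNoetherianRing R] (hm3 : (maximalIdeal R) ^ 3 = ⊥)
    (h : ∀ f : maximalIdeal R →ₗ[R] R, ∃ t : R, ∀ a, f a = a.1 * t) : Module.Injective R R := by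
  apply Module.Baer.injective
  intro I g0
  let f0 : R →ₗ.[R] R := ⟨I, g0⟩
  let S : Set (Submodule R R) := {J | ∃ g : R →ₗ.[R] R, f0 ≤ g ∧ g.domain = J}
  have hS : S.Nonempty := ⟨I, f0, le_rfl, rfl⟩
  obtain ⟨J, ⟨g, hfg, rfl⟩, hmax⟩ := set_has_maximal_iff_noetherian.2 ‹IsNoetherianRing R› S hS
  have htop : g.domain = ⊤ := by
    by_contra hne
    have h3 : ∃ n, (maximalIdeal R) ^ n ≤ g.domain := ⟨3, by rw [hm3]; exact bot_le⟩
    classical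
    let n := Nat.find h3
    have hn : (maximalIdeal R) ^ n ≤ g.domain := Nat.find_spec h3
    have hn0 : n ≠ 0 := by
      intro h0
      rw [h0, pow_zero, Ideal.one_eq_top, top_le_iff] at hn
      exact hne hn
    obtain ⟨k, hk⟩ := Nat.exists_eq_succ_of_ne_zero hn0
    have hk' : ¬ (maximalIdeal R) ^ k ≤ g.domain :=
      Nat.find_min h3 (show k < n by omega)
    obtain ⟨x, hx, hxJ⟩ := SetLike.not_le_iff_exists.1 hk'
    have hmx : ∀ a ∈ maximalIdeal R, a * x ∈ g.domain := by
      intro a ha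
      apply hn
      rw [hk, Nat.succ_eq_add_one, pow_succ']
      exact Ideal.mul_mem_mul ha hx
    have hloc : ∀ a, a * x ∈ g.domain → a ∈ maximalIdeal R := by
      intro a ha
      rw [mem_maximalIdeal, mem_nonunits_iff]
      rintro ⟨u, rfl⟩
      apply hxJ
      have := g.domain.smul_mem (↑u⁻¹ : R) ha
      simpa [← mul_assoc] using this
    let μ : maximalIdeal R →ₗ[R] g.domain :=
      LinearMap.codRestrict _ ((LinearMap.mulRight R x) ∘ₗ (maximalIdeal R).subtype)
        (fun a => hmx a.1 a.2)
    obtain ⟨t, ht⟩ := h (g.toFun ∘ₗ μ)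
    have ht' : ∀ (a : R) (ha : a * x ∈ g.domain), g ⟨a * x, ha⟩ = a * t := by
      intro a ha
      exact ht ⟨a, hloc a ha⟩
    let e : R →ₗ.[R] R := LinearPMap.mkSpanSingleton' x t (by
      intro c hc
      have hc' : c * x = 0 := hc
      have hcd : c * x ∈ g.domain := by rw [hc']; exact g.domain.zero_mem
      have := ht' c hcd
      have h0 : (⟨c * x, hcd⟩ : g.domain) = 0 := Subtype.ext hc'
      rw [h0, LinearPMap.map_zero] at this
      exact this.symm)
    have hcomp : ∀ (y : g.domain) (z : e.domain), (y : R) = z → g y = e z := by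
      rintro ⟨y, hy⟩ ⟨z, hz⟩ hyz
      obtain ⟨c, rfl⟩ := Submodule.mem_span_singleton.1 hz
      have hyz' : y = c * x := hyz
      subst hyz'
      rw [ht' c hy]
      exact (LinearPMap.mkSpanSingleton'_apply x t _ c hz).symm
    let G := g.sup e hcomp
    have hG : g ≤ G := LinearPMap.left_le_sup _ _ _
    have hxG : x ∈ G.domain := 
      (LinearPMap.right_le_sup g e hcomp).1 (Submodule.mem_span_singleton_self x)
    refine hmax G.domain ⟨G, hfg.trans hG, rfl⟩ ?_
    exact lt_of_le_of_ne hG.1 (fun heq => hxJ (heq ▸ hxG))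
  refine ⟨g.toFun ∘ₗ LinearMap.codRestrict _ LinearMap.id (fun x => htop ▸ Submodule.mem_top), ?_⟩
  intro x hx
  exact (hfg.2 (x := ⟨x, hx⟩) (y := ⟨x, htop ▸ Submodule.mem_top⟩) rfl).symm

lemma gorenstein_of_ext [IsNoetherianRing R] (hm3 : (maximalIdeal R) ^ 3 = ⊥)
    (h : Subsingleton (ExtGrp R (R ⧸ maximalIdeal R) R 1)) : IsGorensteinLocalRing R := by
  refine ⟨inferInstance, inferInstance, 0, ?_⟩
  intro N i hi
  obtain ⟨n, rfl⟩ := Nat.exists_eq_succ_of_ne_zero hi.ne'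
  have hinj : Module.Injective R R := by
    apply selfInjective_of_extend hm3
    intro f
    have hs := ext_one_extend (L := R) (maximalIdeal R).mkQ (Submodule.mkQ_surjective _) h
    obtain ⟨G, hG⟩ := hs (f ∘ₗ (LinearEquiv.ofEq _ _ (Submodule.ker_mkQ _)).toLinearMap)
    refine ⟨G 1, fun a => ?_⟩
    have := LinearMap.congr_fun hG ⟨a.1, by simp⟩
    have h2 : G a.1 = f a := this
    rw [← h2, ← smul_eq_mul, ← map_smul, smul_eq_mul, mul_one]
  exact ext_of_injective N R hinj n

lemma soc_le [IsNoetherianRing R] (hng : ¬ IsGorensteinLocalRing R)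
    (hm3 : (maximalIdeal R) ^ 3 = ⊥) (X : Type) [AddCommGroup X] [Module R X]
    (hX : Subsingleton (ExtGrp R X R 1)) (x : X) (hx : ∀ a ∈ maximalIdeal R, a • x = 0) :
    x ∈ maximalIdeal R • (⊤ : Submodule R X) := by
  by_contra hxm
  apply hng
  apply gorenstein_of_ext hm3
  let _ : Field (R ⧸ maximalIdeal R) := Ideal.Quotient.field _
  let Q := X ⧸ (maximalIdeal R • (⊤ : Submodule R X))
  have hne : (Submodule.Quotient.mk x : Q) ≠ 0 := by
    rwa [Ne, Submodule.Quotient.mk_eq_zero]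
  have : ∃ φ : Module.Dual (R ⧸ maximalIdeal R) Q, φ (Submodule.Quotient.mk x) ≠ 0 := by
    by_contra hcon
    push Not at hcon
    exact hne ((Module.forall_dual_apply_eq_zero_iff _ _).1 hcon)
  obtain ⟨φ, hφ⟩ := this
  let ψ : X →ₗ[R] (R ⧸ maximalIdeal R) :=
    (((φ (Submodule.Quotient.mk x))⁻¹ • φ).restrictScalars R) ∘ₗ Submodule.mkQ _
  have hψ : ψ x = 1 := by
    show (φ (Submodule.Quotient.mk x))⁻¹ * φ (Submodule.Quotient.mk x) = 1
    exact inv_mul_cancel₀ hφ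
  let ι : (R ⧸ maximalIdeal R) →ₗ[R] X :=
    (maximalIdeal R).liftQ (LinearMap.toSpanSingleton R X x) (by
      intro a ha
      simpa using hx a ha)
  have hcomp : ModuleCat.ofHom ι ≫ ModuleCat.ofHom ψ = 𝟙 (ModuleCat.of R (R ⧸ maximalIdeal R)) := by
    ext
    show ψ (ι (Submodule.Quotient.mk 1)) = Submodule.Quotient.mk 1
    have : ι (Submodule.Quotient.mk 1) = x := by
      show LinearMap.toSpanSingleton R X x 1 = x
      simp
    rw [this, hψ]
    rfl
  let T := (Ext R (ModuleCat R) 1).flip.obj (ModuleCat.of R R)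
  have hT : T.map (ModuleCat.ofHom ψ).op ≫ T.map (ModuleCat.ofHom ι).op = 𝟙 _ := by
    rw [← T.map_comp, ← op_comp, hcomp, op_id, T.map_id]
  refine subsingleton_of_forall_eq 0 (fun y => ?_)
  have h1 : (T.map (ModuleCat.ofHom ψ).op ≫ T.map (ModuleCat.ofHom ι).op) y = y := by
    rw [hT]; rfl
  have h2 : (T.map (ModuleCat.ofHom ψ).op) y = 0 :=
    @Subsingleton.elim (ExtGrp R X R 1) hX _ _
  rw [← h1]
  show (T.map (ModuleCat.ofHom ι).op) ((T.map (ModuleCat.ofHom ψ).op) y) = 0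
  rw [h2]
  exact map_zero _

end LocalPart

section Lengths
open IsLocalRing CategoryTheory

variable {R : Type} [CommRing R]

lemma length_hom_of_extend {F N L : Type} [AddCommGroup N] [Module R N] [AddCommGroup L]
    [Module R L] [AddCommGroup F] [Module R F] (q : F →ₗ[R] N) (hq : Function.Surjective q)
    (h : Function.Surjective (LinearMap.lcomp R L (LinearMap.ker q).subtype)) :
    Module.length R (F →ₗ[R] L) =
      Module.length R (N →ₗ[R] L) + Module.length R (LinearMap.ker q →ₗ[R] L) := by
  refine Module.length_eq_add_of_exact (LinearMap.lcomp R L q) _ ?_ h ?_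
  · intro f g hfg
    ext x
    obtain ⟨y, rfl⟩ := hq x
    exact LinearMap.congr_fun hfg y
  · intro f
    constructor
    · intro hf
      have hle : LinearMap.ker q ≤ LinearMap.ker f := fun x hx =>
        LinearMap.congr_fun hf ⟨x, hx⟩
      refine ⟨(LinearMap.ker q).liftQ f hle ∘ₗ (q.quotKerEquivOfSurjective hq).symm.toLinearMap, ?_⟩
      ext x
      have : (q.quotKerEquivOfSurjective hq).symm (q x) = Submodule.Quotient.mk x := by
        rw [LinearEquiv.symm_apply_eq]; simp
      simp [this]
    · rintro ⟨g, rfl⟩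
      ext x
      simp

lemma length_hom_pi (b : ℕ) (N L : Type) [AddCommGroup N] [Module R N] [AddCommGroup L]
    [Module R L] : Module.length R ((Fin b → N) →ₗ[R] L) = b * Module.length R (N →ₗ[R] L) := by
  rw [← (LinearMap.lsum R (fun _ : Fin b => N) R (M := L)).length_eq]
  simp

variable [IsLocalRing R]

lemma exists_equiv_pi (K : Type) [AddCommGroup K] [Module R K] [Module.Finite R K]
    (hK : ∀ a ∈ maximalIdeal R, ∀ x : K, a • x = 0) :
    ∃ n : ℕ, Nonempty (K ≃ₗ[R] (Fin n → R ⧸ maximalIdeal R)) := by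
  let _ : Field (R ⧸ maximalIdeal R) := Ideal.Quotient.field _
  have ht : Module.IsTorsionBySet R K (maximalIdeal R) := by
    intro x a
    exact hK a.1 a.2 x
  let _ : Module (R ⧸ maximalIdeal R) K := ht.module
  have : IsScalarTower R (R ⧸ maximalIdeal R) K := ht.isScalarTower
  have : Module.Finite (R ⧸ maximalIdeal R) K := Module.Finite.of_restrictScalars_finite R _ _
  exact ⟨_, ⟨(Module.finBasis (R ⧸ maximalIdeal R) K).equivFun.restrictScalars R⟩⟩

lemma length_residue : Module.length R (R ⧸ maximalIdeal R) = 1 := by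
  have : IsSimpleModule R (R ⧸ maximalIdeal R) :=
    isSimpleModule_iff_isCoatom.2 (Ideal.isMaximal_def.1 inferInstance)
  exact Module.length_eq_one R _

lemma length_hom_killed (K L : Type) [AddCommGroup K] [Module R K] [Module.Finite R K]
    [AddCommGroup L] [Module R L]
    (hK : ∀ a ∈ maximalIdeal R, ∀ x : K, a • x = 0) :
    Module.length R (K →ₗ[R] L) =
      Module.length R K * Module.length R ((R ⧸ maximalIdeal R) →ₗ[R] L) := by
  obtain ⟨n, ⟨e⟩⟩ := exists_equiv_pi K hK
  rw [e.length_eq, (LinearEquiv.congrLeft L R e).length_eq, length_hom_pi]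
  simp [length_residue]

lemma length_ext : Module.length R (maximalIdeal R →ₗ[R] R) +
      Module.length R ((R ⧸ maximalIdeal R) →ₗ[R] R) =
    Module.length R R + Module.length R (ExtGrp R (R ⧸ maximalIdeal R) R 1) := by
  let q : R →ₗ[R] (R ⧸ maximalIdeal R) := (maximalIdeal R).mkQ
  have hq : Function.Surjective q := Submodule.mkQ_surjective _
  obtain ⟨e⟩ := ext_one_equiv (R ⧸ maximalIdeal R) R R q hq
  let ρ := LinearMap.lcomp R R (LinearMap.ker q).subtype
  have h1 : Module.length R (LinearMap.ker q →ₗ[R] R) = 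
      Module.length R (LinearMap.range ρ) + Module.length R (ExtGrp R (R ⧸ maximalIdeal R) R 1) := by
    rw [← e.length_eq]
    exact Module.length_eq_add_of_exact (LinearMap.range ρ).subtype (LinearMap.range ρ).mkQ
      (Submodule.subtype_injective _) (Submodule.mkQ_surjective _) (LinearMap.exact_subtype_mkQ _)
  have h2 : Module.length R (R →ₗ[R] R) =
      Module.length R ((R ⧸ maximalIdeal R) →ₗ[R] R) + Module.length R (LinearMap.range ρ) := by
    refine Module.length_eq_add_of_exact (LinearMap.lcomp R R q) ρ.rangeRestrict ?_
      ρ.surjective_rangeRestrict ?_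
    · intro f g hfg
      ext
      exact LinearMap.congr_fun hfg 1
    · intro f
      constructor
      · intro hf
        have hf' : ρ f = 0 := congrArg Subtype.val hf
        refine ⟨(maximalIdeal R).liftQ f (fun x hx => 
          LinearMap.congr_fun hf' ⟨x, by simpa [q] using hx⟩), ?_⟩
        ext
        rfl
      · rintro ⟨g, rfl⟩
        apply Subtype.ext
        ext x
        show g (q x.1) = 0
        rw [show q x.1 = 0 from x.2, map_zero]
  have h3 : Module.length R (R →ₗ[R] R) = Module.length R R :=
    (LinearMap.ringLmapEquivSelf R R R).length_eq
  have h4 : Module.length R (LinearMap.ker q →ₗ[R] R) = Module.length R (maximalIdeal R →ₗ[R] R) :=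
    (LinearEquiv.congrLeft R R (LinearEquiv.ofEq _ _ (Submodule.ker_mkQ _))).length_eq
  rw [← h4, ← h3, h1, h2]
  ring

lemma main_count (X : Type) [AddCommGroup X] [Module R X] [Module.Finite R X] [IsNoetherianRing R]
    (h2 : ∀ a ∈ maximalIdeal R, ∀ x ∈ maximalIdeal R • (⊤ : Submodule R X), a • x = 0)
    (hX : Subsingleton (ExtGrp R X R 1)) :
    Module.length R (X ⧸ maximalIdeal R • (⊤ : Submodule R X)) *
        Module.length R (maximalIdeal R →ₗ[R] R) + Module.length R (Module.Dual R X) =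
      Module.length R ↥(maximalIdeal R • (⊤ : Submodule R X)) *
        Module.length R ((R ⧸ maximalIdeal R) →ₗ[R] R) +
      Module.length R (X ⧸ maximalIdeal R • (⊤ : Submodule R X)) * Module.length R R := by
  let mX : Submodule R X := maximalIdeal R • (⊤ : Submodule R X)
  have hkill : ∀ a ∈ maximalIdeal R, ∀ x : X ⧸ mX, a • x = 0 := by
    intro a ha x
    obtain ⟨x, rfl⟩ := Submodule.Quotient.mk_surjective _ x
    rw [← Submodule.Quotient.mk_smul, Submodule.Quotient.mk_eq_zero]
    exact Submodule.smul_mem_smul ha trivial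
  obtain ⟨b, ⟨e⟩⟩ := exists_equiv_pi (X ⧸ mX) hkill
  have hb : Module.length R (X ⧸ mX) = b := by
    rw [e.length_eq]; simp [length_residue]
  -- the quotient map R^b → k^b, lifted
  let qb : (Fin b → R) →ₗ[R] (Fin b → R ⧸ maximalIdeal R) :=
    LinearMap.pi (fun i => (maximalIdeal R).mkQ ∘ₗ LinearMap.proj i)
  have hqb : ∀ v i, qb v i = Submodule.Quotient.mk (v i) := fun v i => rfl
  have hqbs : Function.Surjective qb := by
    intro w
    choose v hv using fun i => Submodule.Quotient.mk_surjective _ (w i)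
    exact ⟨v, funext hv⟩
  obtain ⟨π, hπ⟩ := Module.projective_lifting_property (e.toLinearMap ∘ₗ mX.mkQ) qb
    (e.surjective.comp (Submodule.mkQ_surjective _))
  have hπ' : ∀ v, e (Submodule.Quotient.mk (π v)) = qb v := LinearMap.congr_fun hπ
  have hmem : ∀ v, π v ∈ mX ↔ ∀ i, v i ∈ maximalIdeal R := by
    intro v
    rw [← Submodule.Quotient.mk_eq_zero, ← e.map_eq_zero_iff, hπ']
    constructor
    · intro h i
      have := congrFun h i
      rw [hqb] at this
      exact (Submodule.Quotient.mk_eq_zero _).1 this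
    · intro h
      funext i
      rw [hqb]
      exact (Submodule.Quotient.mk_eq_zero _).2 (h i)
  have hπs : Function.Surjective π := by
    rw [← LinearMap.range_eq_top, ← IsLocalRing.map_mkQ_eq_top, eq_top_iff]
    intro y _
    obtain ⟨v, hv⟩ := hqbs (e y)
    refine ⟨π v, ⟨v, rfl⟩, ?_⟩
    apply e.injective
    rw [← hv, ← hπ']
    rfl
  have hext := ext_one_extend (L := R) π hπs hX
  have L1 := length_hom_of_extend (L := R) π hπs hext
  rw [length_hom_pi, (LinearMap.ringLmapEquivSelf R R R).length_eq] at L1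
  -- the restriction m^b → mX
  let inc : (Fin b → maximalIdeal R) →ₗ[R] (Fin b → R) :=
    LinearMap.pi (fun i => (maximalIdeal R).subtype ∘ₗ LinearMap.proj i)
  have hinc : ∀ v i, inc v i = (v i).1 := fun v i => rfl
  let π' : (Fin b → maximalIdeal R) →ₗ[R] mX := LinearMap.codRestrict _ (π ∘ₗ inc) (by
    intro v
    exact (hmem _).2 (fun i => (v i).2))
  have hπ's : Function.Surjective π' := by
    rintro ⟨x, hx⟩
    obtain ⟨v, rfl⟩ := hπs x
    exact ⟨fun i => ⟨v i, (hmem v).1 hx i⟩, Subtype.ext rfl⟩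
  let ε : LinearMap.ker π' ≃ₗ[R] LinearMap.ker π := LinearEquiv.ofBijective
    (LinearMap.codRestrict _ (inc ∘ₗ (LinearMap.ker π').subtype) (by
      rintro ⟨v, hv⟩
      exact congrArg Subtype.val hv)) (by
      constructor
      · rintro ⟨v, hv⟩ ⟨w, hw⟩ hvw
        have : inc v = inc w := congrArg Subtype.val hvw
        apply Subtype.ext
        funext i
        exact Subtype.ext (congrFun this i)
      · rintro ⟨v, hv⟩
        have hv0 : π v = 0 := hv
        have hv' := (hmem v).1 (by rw [hv0]; exact mX.zero_mem)
        exact ⟨⟨fun i => ⟨v i, hv' i⟩, Subtype.ext hv0⟩, Subtype.ext rfl⟩)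
  have hε : ∀ v, (ε v).1 = inc v.1 := fun v => rfl
  have L2 := length_hom_of_extend (L := R) π' hπ's (by
    intro f
    obtain ⟨G, hG⟩ := hext (f ∘ₗ ε.symm.toLinearMap)
    refine ⟨G ∘ₗ inc, ?_⟩
    ext v
    have := LinearMap.congr_fun hG (ε v)
    simpa [hε] using this)
  rw [length_hom_pi, (LinearEquiv.congrLeft R R ε).length_eq, length_hom_killed mX R (by
    intro a ha x
    exact Subtype.ext (h2 a ha x.1 x.2))] at L2
  change Module.length R (X ⧸ mX) * _ + _ = Module.length R mX * _ + Module.length R (X ⧸ mX) * _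
  rw [hb, L2, L1]
  show _ + Module.length R (X →ₗ[R] R) = _
  ring

lemma length_mX [IsNoetherianRing R] (X Y : Type) [AddCommGroup X] [Module R X] [Module.Finite R X]
    [AddCommGroup Y] [Module R Y] (e : Y ≃ₗ[R] Module.Dual R X)
    (h2 : ∀ a ∈ maximalIdeal R, ∀ x ∈ maximalIdeal R • (⊤ : Submodule R Y), a • x = 0)
    (hsoc : ∀ y : Y, (∀ a ∈ maximalIdeal R, a • y = 0) →
      y ∈ maximalIdeal R • (⊤ : Submodule R Y)) :
    Module.length R ↥(maximalIdeal R • (⊤ : Submodule R Y)) =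
      Module.length R (X ⧸ maximalIdeal R • (⊤ : Submodule R X)) *
        Module.length R ((R ⧸ maximalIdeal R) →ₗ[R] R) := by
  let mX : Submodule R X := maximalIdeal R • (⊤ : Submodule R X)
  have hkill : ∀ a ∈ maximalIdeal R, ∀ x : X ⧸ mX, a • x = 0 := by
    intro a ha x
    obtain ⟨x, rfl⟩ := Submodule.Quotient.mk_surjective _ x
    rw [← Submodule.Quotient.mk_smul, Submodule.Quotient.mk_eq_zero]
    exact Submodule.smul_mem_smul ha trivial
  rw [← length_hom_killed (X ⧸ mX) R hkill]
  symm
  refine LinearEquiv.length_eq (LinearEquiv.ofBijective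
    (LinearMap.codRestrict _ (e.symm.toLinearMap ∘ₗ LinearMap.lcomp R R mX.mkQ) ?_) ⟨?_, ?_⟩)
  · intro f
    apply hsoc
    intro a ha
    have : a • f = 0 := by
      ext x
      have := hkill a ha (Submodule.Quotient.mk x)
      show a • f (Submodule.Quotient.mk x) = 0
      rw [← map_smul, this, map_zero]
    rw [← map_smul, this, map_zero]
  · intro f g hfg
    have h1 := e.symm.injective (congrArg Subtype.val hfg)
    ext x
    exact LinearMap.congr_fun h1 x
  · rintro ⟨y, hy⟩
    have hle : mX ≤ LinearMap.ker (e y) := by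
      refine Submodule.smul_le.2 ?_
      intro a ha x _
      have := h2 a ha y hy
      rw [LinearMap.mem_ker, map_smul, ← LinearMap.smul_apply, ← map_smul, this, map_zero]
      rfl
    refine ⟨mX.liftQ (e y) hle, ?_⟩
    apply Subtype.ext
    show e.symm _ = y
    rw [LinearEquiv.symm_apply_eq]
    ext x
    rfl

end Lengths

section Final
open IsLocalRing CategoryTheory

variable {R : Type} [CommRing R] [IsLocalRing R]

lemma dual_apply_mem (M : Type) [AddCommGroup M] [Module R M]
    (hind : IsIndecomposableModule R M) (hnf : ¬ Module.Free R M) (φ : Module.Dual R M) (x : M) :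
    φ x ∈ maximalIdeal R := by
  by_contra hx
  have hu : IsUnit (φ x) := by
    by_contra h
    exact hx ((mem_maximalIdeal _).2 h)
  obtain ⟨u, hu⟩ := hu
  have hc : IsCompl (LinearMap.ker φ) (Submodule.span R {x}) := by
    constructor
    · rw [Submodule.disjoint_def]
      intro y hy hys
      obtain ⟨a, rfl⟩ := Submodule.mem_span_singleton.1 hys
      have : a * (u : R) = 0 := by simpa [hu] using hy
      rw [Units.mul_left_eq_zero] at this
      simp [this]
    · rw [codisjoint_iff, eq_top_iff]
      intro y _
      refine Submodule.mem_sup.2 ⟨y - (φ y * ↑u⁻¹) • x, ?_, (φ y * ↑u⁻¹) • x,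
        Submodule.smul_mem _ _ (Submodule.mem_span_singleton_self x), by simp⟩
      rw [LinearMap.mem_ker, map_sub, map_smul, ← hu]
      simp
  rcases hind.2 _ _ hc with h | h
  · apply hnf
    have hbij : Function.Bijective φ := by
      refine ⟨LinearMap.ker_eq_bot.1 h, fun y => ⟨(y * ↑u⁻¹) • x, ?_⟩⟩
      rw [map_smul, ← hu]
      simp
    exact Module.Free.of_equiv (LinearEquiv.ofBijective φ hbij).symm
  · rw [Submodule.span_singleton_eq_bot] at h
    rw [h, map_zero] at hx
    exact hx (zero_mem _)

lemma mlength_eq (M : Type) [AddCommGroup M] [Module R M] :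
    mlength R M = (Module.length R M : ℕ∞) := (Module.coe_length R M).symm

end Final

/-- dim_k Ext¹(k,R) = r² - 1. -/
theorem stmt_9 (R : Type) [CommRing R] [IsNoetherianRing R] [IsLocalRing R]
    (hng : ¬ IsGorensteinLocalRing R)
    (hm3 : (IsLocalRing.maximalIdeal R) ^ 3 = ⊥)
    (hm2 : (IsLocalRing.maximalIdeal R) ^ 2 ≠ ⊥)
    (M : Type) [AddCommGroup M] [Module R M] [Module.Finite R M]
    (hind : IsIndecomposableModule R M) (hnf : ¬ Module.Free R M)
    (hG : GDimZero R M) :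
    ∃ r : ℕ, typeLen R = (r : ℕ∞) ∧
      mlength R (ExtGrp R (R ⧸ IsLocalRing.maximalIdeal R) R 1) =
        ((r ^ 2 - 1 : ℕ) : ℕ∞) := by
  classical
  have hart : IsArtinianRing R :=
    (isArtinianRing_iff_isNilpotent_maximalIdeal R).2 ⟨3, hm3⟩
  have hfin : ∀ (X : Type) [AddCommGroup X] [Module R X] [Module.Finite R X],
      ∃ n : ℕ, Module.length R X = n := by
    intro X _ _ _
    exact ⟨_, (ENat.coe_toNat (Module.length_ne_top (R := R) (M := X))).symm⟩
  obtain ⟨hbij, hE1, hE2⟩ := hG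
  have hmem := dual_apply_mem M hind hnf
  have hE := hE1 1 one_pos
  have hE' := hE2 1 one_pos
  let ev : M ≃ₗ[R] Module.Dual R (Module.Dual R M) := LinearEquiv.ofBijective _ hbij
  have hprod : ∀ a ∈ IsLocalRing.maximalIdeal R, ∀ b ∈ IsLocalRing.maximalIdeal R,
      ∀ c ∈ IsLocalRing.maximalIdeal R, a * (b * c) = 0 := by
    intro a ha b hb c hc
    have : a * (b * c) ∈ (IsLocalRing.maximalIdeal R) ^ 3 := by
      rw [pow_succ', pow_two]
      exact Ideal.mul_mem_mul ha (Ideal.mul_mem_mul hb hc)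
    rwa [hm3] at this
  -- `m² M* = 0`
  have h2' : ∀ a ∈ IsLocalRing.maximalIdeal R,
      ∀ x ∈ IsLocalRing.maximalIdeal R • (⊤ : Submodule R (Module.Dual R M)), a • x = 0 := by
    intro a ha x hx
    induction hx using Submodule.smul_induction_on' with
    | smul b hb φ _ =>
      ext y
      exact hprod a ha b hb _ (hmem φ y)
    | add x _ y _ hx hy => rw [smul_add, hx, hy, add_zero]
  -- `m² M = 0`
  have h2 : ∀ a ∈ IsLocalRing.maximalIdeal R,
      ∀ x ∈ IsLocalRing.maximalIdeal R • (⊤ : Submodule R M), a • x = 0 := by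
    intro a ha x hx
    induction hx using Submodule.smul_induction_on' with
    | smul b hb y _ =>
      apply hbij.1
      rw [map_zero]
      ext φ
      show φ (a • b • y) = 0
      rw [map_smul, map_smul]
      exact hprod a ha b hb _ (hmem φ y)
    | add x _ y _ hx hy => rw [smul_add, hx, hy, add_zero]
  have hsoc := soc_le hng hm3 M hE
  have hsoc' := soc_le hng hm3 (Module.Dual R M) hE'
  have hadd : ∀ (X : Type) [AddCommGroup X] [Module R X] (N : Submodule R X),
      Module.length R X = Module.length R N + Module.length R (X ⧸ N) := by
    intro X _ _ N
    exact Module.length_eq_add_of_exact N.subtype N.mkQ (Submodule.subtype_injective _)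
      (Submodule.mkQ_surjective _) (LinearMap.exact_subtype_mkQ _)
  have c1 := main_count M h2 hE
  have c2 := main_count (Module.Dual R M) h2' hE'
  have d1 := length_mX (Module.Dual R M) M ev h2 hsoc
  have d2 := length_mX M (Module.Dual R M) (LinearEquiv.refl R _) h2' hsoc'
  have a1 := hadd M (IsLocalRing.maximalIdeal R • (⊤ : Submodule R M))
  have a2 := hadd (Module.Dual R M) (IsLocalRing.maximalIdeal R • (⊤ : Submodule R (Module.Dual R M)))
  have x1 := length_ext (R := R)
  rw [← ev.length_eq, a1] at c2
  rw [a2] at c1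
  have hMne : Nontrivial M := by
    by_contra h
    rw [not_nontrivial_iff_subsingleton] at h
    exact hind.1 (Subsingleton.elim _ _)
  have hlpos : 0 < Module.length R M := Module.length_pos
  obtain ⟨b, hb⟩ := hfin (M ⧸ IsLocalRing.maximalIdeal R • (⊤ : Submodule R M))
  obtain ⟨b', hb'⟩ := hfin (Module.Dual R M ⧸ IsLocalRing.maximalIdeal R •
    (⊤ : Submodule R (Module.Dual R M)))
  obtain ⟨r, hr⟩ := hfin ((R ⧸ IsLocalRing.maximalIdeal R) →ₗ[R] R)
  obtain ⟨H, hH⟩ := hfin (IsLocalRing.maximalIdeal R →ₗ[R] R)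
  obtain ⟨l, hl⟩ := hfin R
  rw [hH, hr, hl] at x1
  obtain ⟨μ, hμ⟩ : ∃ μ : ℕ,
      Module.length R (ExtGrp R (R ⧸ IsLocalRing.maximalIdeal R) R 1) = μ := by
    refine ⟨_, (ENat.coe_toNat ?_).symm⟩
    intro htop
    rw [htop, add_top] at x1
    exact ENat.coe_ne_top (H + r) (by exact_mod_cast x1)
  rw [a1] at hlpos
  rw [hμ] at x1
  rw [d1, d2, hb, hb', hr, hH, hl] at c1 c2
  rw [d1, hb, hb', hr] at hlpos
  norm_cast at c1 c2 x1 hlpos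
  refine ⟨r, ?_, ?_⟩
  · rw [typeLen, mlength_eq, hr]
  · rw [mlength_eq, hμ]
    suffices μ = r ^ 2 - 1 by rw [this]
    have k1 : b * μ + b' = b' * r ^ 2 := by nlinarith [congrArg (b * ·) x1]
    have k2 : b' * μ + b = b * r ^ 2 := by nlinarith [congrArg (b' * ·) x1]
    have k3 : (b + b') * (μ + 1) = (b + b') * r ^ 2 := by nlinarith
    have hpos : 0 < b + b' := by
      rcases Nat.eq_zero_or_pos (b + b') with h | h
      · have h1 : b = 0 := by omega
        have h2 : b' = 0 := by omega
        simp [h1, h2] at hlpos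
      · exact h
    have := Nat.eq_of_mul_eq_mul_left hpos k3
    omega
end

section
/- Let (R,m) be a non-Gorenstein Noetherian local ring with m³ = (0), m² ≠ (0), and let M be a nonfree indecomposable finitely generated R-module of G-dimension zero, minimally generated by b elements, with first syzygy ΩM ⊆ R^b from a minimal free cover R^b → M. Then mΩM = m²R^b, and ΩM is also minimally generated by b elements. -/
open CategoryTheory

/-- for a minimal free cover π : R^b → M with syzygy ΩM = ker π,
one has m·ΩM = m²·R^b, and ΩM is minimally generated by b elements. -/

lemma ext_succ_iff (R : Type) [CommRing R] (X Y : ModuleCat.{0} R) (P : ProjectiveResolution X) (n : ℕ) :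
    Subsingleton (((Ext R (ModuleCat R) (n+1)).obj (Opposite.op X)).obj Y) ↔
    ∀ g : P.complex.X (n+1) ⟶ Y, P.complex.d (n+2) (n+1) ≫ g = 0 →
      ∃ h : P.complex.X n ⟶ Y, P.complex.d (n+1) n ≫ h = g := by
  rw [← ModuleCat.isZero_iff_subsingleton, (P.isoExt (n+1) Y).isZero_iff,
    ← HomologicalComplex.exactAt_iff_isZero_homology,
    HomologicalComplex.exactAt_iff' _ n (n+1) (n+2) (by simp) (by simp),
    ShortComplex.moduleCat_exact_iff]
  exact Iff.rfl

lemma ext_zero_of_injective (R : Type) [CommRing R] (X Y : ModuleCat.{0} R) [Injective Y] (n : ℕ) :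
    Subsingleton (((Ext R (ModuleCat R) (n+1)).obj (Opposite.op X)).obj Y) := by
  obtain ⟨P⟩ := HasProjectiveResolution.out (Z := X)
  rw [ext_succ_iff R X Y P n]
  intro g hg
  have hex := P.complex_exactAt_succ n
  rw [HomologicalComplex.exactAt_iff' _ (n+2) (n+1) n (by simp) (by simp)] at hex
  exact ⟨hex.descToInjective g hg, hex.comp_descToInjective g hg⟩

lemma ext_data_s10 (R : Type) [CommRing R] (M : Type) [AddCommGroup M] [Module R M]
    (h1 : Subsingleton (((Ext R (ModuleCat R) 1).obj (Opposite.op (ModuleCat.of R M))).obj (ModuleCat.of R R)))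
    (h2 : Subsingleton (((Ext R (ModuleCat R) 2).obj (Opposite.op (ModuleCat.of R M))).obj (ModuleCat.of R R))) :
    ∃ (P : ℕ → ModuleCat.{0} R) (d : ∀ n, P (n+1) →ₗ[R] P n) (ε : P 0 →ₗ[R] M),
      (∀ n, Module.Projective R (P n)) ∧ Function.Surjective ε ∧ Function.Exact (d 0) ε ∧
      (∀ n, Function.Exact (d (n+1)) (d n)) ∧
      (∀ g : P 1 →ₗ[R] R, g ∘ₗ d 1 = 0 → ∃ h : P 0 →ₗ[R] R, h ∘ₗ d 0 = g) ∧
      (∀ g : P 2 →ₗ[R] R, g ∘ₗ d 2 = 0 → ∃ h : P 1 →ₗ[R] R, h ∘ₗ d 1 = g) := by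
  obtain ⟨P⟩ := HasProjectiveResolution.out (Z := ModuleCat.of R M)
  rw [ext_succ_iff R _ _ P] at h1 h2
  refine ⟨P.complex.X, fun n => (P.complex.d (n+1) n).hom, (P.π.f 0).hom, ?_, ?_, ?_, ?_, ?_, ?_⟩
  · intro n
    rw [IsProjective.iff_projective]
    exact P.projective n
  · exact (ModuleCat.epi_iff_surjective _).1 inferInstance
  · have := P.exact₀
    rw [ShortComplex.ShortExact.moduleCat_exact_iff_function_exact] at this
    exact this
  · intro n
    have hex := P.complex_exactAt_succ n
    rw [HomologicalComplex.exactAt_iff' _ (n+2) (n+1) n (by simp) (by simp), ShortComplex.ShortExact.moduleCat_exact_iff_function_exact] at hex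
    exact hex
  · intro g hg
    obtain ⟨h, hh⟩ := h1 (ModuleCat.ofHom g) (by ext x; exact LinearMap.congr_fun hg x)
    exact ⟨h.hom, by rw [← ModuleCat.hom_comp, hh]; rfl⟩
  · intro g hg
    obtain ⟨h, hh⟩ := h2 (ModuleCat.ofHom g) (by ext x; exact LinearMap.congr_fun hg x)
    exact ⟨h.hom, by rw [← ModuleCat.hom_comp, hh]; rfl⟩

lemma lift_exact {R : Type} [CommRing R] {A B C Q : Type} [AddCommGroup A] [Module R A] [AddCommGroup B] [Module R B]
    [AddCommGroup C] [Module R C] [AddCommGroup Q] [Module R Q] [Module.Projective R Q]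
    (d : A →ₗ[R] B) (e : B →ₗ[R] C) (hex : Function.Exact d e) (g : Q →ₗ[R] B) (hg : e ∘ₗ g = 0) :
    ∃ h : Q →ₗ[R] A, d ∘ₗ h = g := by
  have hmem : ∀ q, g q ∈ LinearMap.range d := fun q => (hex (g q)).1 (LinearMap.congr_fun hg q)
  obtain ⟨h, hh⟩ := Module.projective_lifting_property d.rangeRestrict (g.codRestrict _ hmem) d.surjective_rangeRestrict
  refine ⟨h, ?_⟩
  ext q
  have := congrArg Subtype.val (LinearMap.congr_fun hh q)
  simpa using this

/-- all homs from the kernel extend -/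
def ExtendsKer {R : Type} [CommRing R] {F X : Type} [AddCommGroup F] [Module R F] [AddCommGroup X] [Module R X]
    (p : F →ₗ[R] X) : Prop :=
  ∀ f : LinearMap.ker p →ₗ[R] R, ∃ g : F →ₗ[R] R, ∀ k : LinearMap.ker p, g k = f k

lemma extendsKer_of_ext {R : Type} [CommRing R] {M : Type} [AddCommGroup M] [Module R M]
    (h1 : Subsingleton (((Ext R (ModuleCat R) 1).obj (Opposite.op (ModuleCat.of R M))).obj (ModuleCat.of R R)))
    (h2 : Subsingleton (((Ext R (ModuleCat R) 2).obj (Opposite.op (ModuleCat.of R M))).obj (ModuleCat.of R R)))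
    {F G : Type} [AddCommGroup F] [Module R F] [Module.Projective R F]
    [AddCommGroup G] [Module R G] [Module.Projective R G]
    (p : F →ₗ[R] M) (hp : Function.Surjective p)
    (q : G →ₗ[R] LinearMap.ker p) (hq : Function.Surjective q) :
    ExtendsKer p ∧ ExtendsKer q := by
  obtain ⟨P, d, ε, hproj, hε, hex0, hex, H1, H2⟩ := ext_data_s10 R M h1 h2
  have := hproj 0
  have := hproj 1
  obtain ⟨u, hu⟩ := Module.projective_lifting_property ε p hε
  obtain ⟨v, hv⟩ := Module.projective_lifting_property p ε hp
  replace hu : ∀ x, ε (u x) = p x := fun x => LinearMap.congr_fun hu x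
  replace hv : ∀ x, p (v x) = ε x := fun x => LinearMap.congr_fun hv x
  have hδex : Function.Exact ((LinearMap.ker p).subtype ∘ₗ q) p := by
    intro y
    constructor
    · intro hy
      obtain ⟨x, hx⟩ := hq ⟨y, hy⟩
      exact ⟨x, by simp [hx]⟩
    · rintro ⟨x, rfl⟩
      exact (q x).2
  constructor
  · intro f
    let vd : P 1 →ₗ[R] LinearMap.ker p := (v ∘ₗ d 0).codRestrict _ (fun x => by
      simp [hv, hex0.apply_apply_eq_zero])
    obtain ⟨h, hh⟩ := H1 (f ∘ₗ vd) (by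
      ext x
      have : vd (d 1 x) = 0 := by
        ext; simp [vd, (hex 0).apply_apply_eq_zero]
      simp [this])
    let w : F →ₗ[R] LinearMap.ker p := (v ∘ₗ u - LinearMap.id).codRestrict _ (fun x => by
      simp [hv, hu])
    refine ⟨h ∘ₗ u - f ∘ₗ w, fun k => ?_⟩
    obtain ⟨y, hy⟩ := (hex0 (u k)).1 (by rw [hu]; exact k.2)
    have e1 : h (u k) = f (vd y) := by rw [← hy]; exact LinearMap.congr_fun hh y
    have e2 : vd y = w k + k := by
      ext; simp [vd, w, hy]
    simp [e1, e2]
  · intro f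
    obtain ⟨u1, hu1⟩ := lift_exact (d 0) ε hex0 (u ∘ₗ (LinearMap.ker p).subtype ∘ₗ q) (by
      ext x; simp [hu])
    obtain ⟨v1, hv1⟩ := lift_exact ((LinearMap.ker p).subtype ∘ₗ q) p hδex (v ∘ₗ d 0) (by
      ext x; simp [hv, hex0.apply_apply_eq_zero])
    obtain ⟨s, hs⟩ := lift_exact ((LinearMap.ker p).subtype ∘ₗ q) p hδex (v ∘ₗ u - LinearMap.id) (by
      ext x; simp [hv, hu])
    replace hu1 : ∀ x, d 0 (u1 x) = u (q x) := fun x => LinearMap.congr_fun hu1 x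
    replace hv1 : ∀ x, (q (v1 x) : F) = v (d 0 x) := fun x => LinearMap.congr_fun hv1 x
    replace hs : ∀ x, (q (s x) : F) = v (u x) - x := fun x => LinearMap.congr_fun hs x
    let vd : P 2 →ₗ[R] LinearMap.ker q := (v1 ∘ₗ d 1).codRestrict _ (fun x => by
      rw [LinearMap.mem_ker]; ext; simp [hv1, (hex 0).apply_apply_eq_zero])
    obtain ⟨h, hh⟩ := H2 (f ∘ₗ vd) (by
      ext x
      have : vd (d 2 x) = 0 := by
        ext; simp [vd, (hex 1).apply_apply_eq_zero]
      simp [this])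
    let w : G →ₗ[R] LinearMap.ker q := (v1 ∘ₗ u1 - LinearMap.id - s ∘ₗ (LinearMap.ker p).subtype ∘ₗ q).codRestrict _ (fun x => by
      rw [LinearMap.mem_ker]; ext; simp [hv1, hu1, hs])
    refine ⟨h ∘ₗ u1 - f ∘ₗ w, fun k => ?_⟩
    have hk : q k = 0 := k.2
    obtain ⟨y, hy⟩ := ((hex 0) (u1 k)).1 (by rw [hu1, hk]; simp)
    have e1 : h (u1 k) = f (vd y) := by rw [← hy]; exact LinearMap.congr_fun hh y
    have e2 : vd y = w k + k := by
      ext; simp [vd, w, hy, hk]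
    simp [e1, e2]

/-- Gorenstein criterion -/
lemma gorenstein_of_extend (R : Type) [CommRing R] [IsNoetherianRing R] [IsLocalRing R]
    (hm3 : (IsLocalRing.maximalIdeal R) ^ 3 = ⊥)
    (h : ∀ f : IsLocalRing.maximalIdeal R →ₗ[R] R, ∃ t : R, ∀ a : IsLocalRing.maximalIdeal R, f a = a * t) :
    IsGorensteinLocalRing R := by
  suffices hB : Module.Baer R R by
    have := Module.Baer.injective hB
    have : Injective (ModuleCat.of R R) := Module.injective_object_of_injective_module R R
    refine ⟨inferInstance, inferInstance, 0, fun N i hi => ?_⟩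
    obtain ⟨n, rfl⟩ : ∃ n, i = n + 1 := ⟨i - 1, by omega⟩
    exact ext_zero_of_injective R N _ n
  intro I f
  let S : Set (Ideal R) := {J | I ≤ J ∧ ∃ g : J →ₗ[R] R, ∀ (x : R) (hx : x ∈ I) (hx' : x ∈ J), g ⟨x, hx'⟩ = f ⟨x, hx⟩}
  obtain ⟨J, ⟨hIJ, g, hg⟩, hmax⟩ := (set_has_maximal_iff_noetherian.mpr (inferInstanceAs (IsNoetherian R R))) S
    ⟨I, le_rfl, f, fun _ _ _ => rfl⟩
  by_cases hJ : J = ⊤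
  · subst hJ
    exact ⟨g ∘ₗ LinearMap.id.codRestrict ⊤ (fun _ => trivial), fun x hx => hg x hx _⟩
  exfalso
  have hx : ∃ x, x ∉ J ∧ ∀ a ∈ IsLocalRing.maximalIdeal R, a * x ∈ J := by
    by_contra hcon
    push Not at hcon
    obtain ⟨a, ha, h1⟩ := hcon 1 (fun h1 => hJ ((Ideal.eq_top_iff_one _).2 h1))
    obtain ⟨b, hb, h2⟩ := hcon _ h1
    obtain ⟨c, hc, h3⟩ := hcon _ h2
    apply h3
    have : c * (b * (a * 1)) ∈ (IsLocalRing.maximalIdeal R)^3 := by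
      rw [mul_one, pow_three]
      exact Ideal.mul_mem_mul hc (Ideal.mul_mem_mul hb ha)
    rw [hm3] at this
    rw [Ideal.mem_bot.1 this]; exact J.zero_mem
  obtain ⟨x, hxJ, hx⟩ := hx
  let φ : IsLocalRing.maximalIdeal R →ₗ[R] R := g ∘ₗ
    ((LinearMap.toSpanSingleton R R x) ∘ₗ (IsLocalRing.maximalIdeal R).subtype).codRestrict J (fun a => hx a a.2)
  obtain ⟨t, ht⟩ := h φ
  have key : ∀ (r : R) (hr : r * x ∈ J), g ⟨r * x, hr⟩ = r * t := by
    intro r hr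
    have hrm : r ∈ IsLocalRing.maximalIdeal R := by
      by_contra hu
      have hu : IsUnit r := by simpa using hu
      exact hxJ ((Ideal.unit_mul_mem_iff_mem J hu).1 hr)
    exact ht ⟨r, hrm⟩
  -- extend to J ⊔ span x
  have hdec : ∀ z : ↥(J ⊔ Ideal.span {x}), ∃ (j : J) (r : R), (z : R) = j + r * x := by
    rintro ⟨z, hz⟩
    obtain ⟨j, hj, y, hy, rfl⟩ := Submodule.mem_sup.1 hz
    obtain ⟨r, rfl⟩ := Ideal.mem_span_singleton'.1 hy
    exact ⟨⟨j, hj⟩, r, rfl⟩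
  choose j r hjr using hdec
  have wd : ∀ (z : ↥(J ⊔ Ideal.span {x})) (j' : J) (r' : R), (z : R) = j' + r' * x → g (j z) + r z * t = g j' + r' * t := by
    intro z j' r' hz
    have e : (r z - r') * x = ((j' - j z : J) : R) := by
      have := hjr z
      push_cast
      linear_combination hz - this
    have := key (r z - r') (by rw [e]; exact (j' - j z).2)
    have h2 : (⟨(r z - r') * x, by rw [e]; exact (j' - j z).2⟩ : J) = j' - j z := Subtype.ext e
    rw [h2, map_sub] at this
    linear_combination -this
  let g' : ↥(J ⊔ Ideal.span {x}) →ₗ[R] R :=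
    { toFun := fun z => g (j z) + r z * t
      map_add' := by
        intro z w
        rw [wd (z+w) (j z + j w) (r z + r w) (by push_cast; rw [hjr z, hjr w]; ring), map_add]; ring
      map_smul' := by
        intro c z
        rw [wd (c • z) (c • j z) (c * r z) (by push_cast; simp only [smul_eq_mul]; rw [hjr z]; ring), map_smul]
        simp only [smul_eq_mul, RingHom.id_apply]; ring }
  refine hmax (J ⊔ Ideal.span {x}) ⟨hIJ.trans le_sup_left, g', ?_⟩ ?_
  · intro y hy hy'
    change g (j ⟨y, hy'⟩) + r ⟨y, hy'⟩ * t = _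
    rw [wd ⟨y, hy'⟩ ⟨y, hIJ hy⟩ 0 (by simp), hg y hy]; simp
  · refine lt_of_le_of_ne le_sup_left fun he => hxJ ?_
    rw [he]; exact Submodule.mem_sup_right (Ideal.mem_span_singleton_self x)

section lengths
open IsLocalRing

/-- natural-number-valued length -/
noncomputable def ln (R : Type) [CommRing R] (X : Type) [AddCommGroup X] [Module R X] : ℕ :=
  (Module.length R X).toNat

variable {R : Type} [CommRing R]

lemma coe_ln [IsArtinianRing R] (X : Type) [AddCommGroup X] [Module R X] [Module.Finite R X] :
    (ln R X : ℕ∞) = Module.length R X := by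
  have : Module.length R X ≠ ⊤ := Module.length_ne_top
  exact ENat.natCast_toNat this

lemma ln_congr {X Y : Type} [AddCommGroup X] [Module R X] [AddCommGroup Y] [Module R Y]
    (e : X ≃ₗ[R] Y) : ln R X = ln R Y := by
  simp only [ln, e.length_eq]

lemma ln_exact [IsArtinianRing R] {A B C : Type} [AddCommGroup A] [Module R A] [AddCommGroup B] [Module R B]
    [AddCommGroup C] [Module R C] [Module.Finite R B] (f : A →ₗ[R] B) (g : B →ₗ[R] C)
    (hf : Function.Injective f) (hg : Function.Surjective g) (h : Function.Exact f g) :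
    ln R B = ln R A + ln R C := by
  have : Module.Finite R A := Module.Finite.of_injective f hf
  have : Module.Finite R C := Module.Finite.of_surjective g hg
  have e := Module.length_eq_add_of_exact f g hf hg h
  rw [← coe_ln, ← coe_ln, ← coe_ln] at e
  exact_mod_cast e

lemma ln_pi [IsArtinianRing R] (n : ℕ) (X : Type) [AddCommGroup X] [Module R X] [Module.Finite R X] :
    ln R (Fin n → X) = n * ln R X := by
  have e := Module.length_pi_of_fintype (R := R) (fun _ : Fin n => X)
  simp only [← coe_ln, Finset.sum_const, Finset.card_univ, Fintype.card_fin, nsmul_eq_mul] at e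
  exact_mod_cast e

lemma ln_dual_pi [IsArtinianRing R] (n : ℕ) (X : Type) [AddCommGroup X] [Module R X] [Module.Finite R X] :
    ln R ((Fin n → X) →ₗ[R] R) = n * ln R (X →ₗ[R] R) := by
  rw [← ln_pi]
  exact ln_congr (LinearMap.lsum R (fun _ : Fin n => X) R).symm

lemma ln_dual_self : ln R (R →ₗ[R] R) = ln R R := ln_congr (LinearMap.ringLmapEquivSelf R R R)

lemma ln_dual_exact [IsArtinianRing R] {A B C : Type} [AddCommGroup A] [Module R A] [AddCommGroup B] [Module R B]
    [AddCommGroup C] [Module R C] [Module.Finite R B] (f : A →ₗ[R] B) (g : B →ₗ[R] C)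
    (hg : Function.Surjective g) (h : Function.Exact f g)
    (hext : ∀ φ : A →ₗ[R] R, ∃ ψ : B →ₗ[R] R, ∀ a, ψ (f a) = φ a) :
    ln R (B →ₗ[R] R) = ln R (C →ₗ[R] R) + ln R (A →ₗ[R] R) := by
  refine ln_exact (LinearMap.lcomp R R g) (LinearMap.lcomp R R f) ?_ ?_ ?_
  · intro φ ψ hh
    ext c
    obtain ⟨b, rfl⟩ := hg c
    exact LinearMap.congr_fun hh b
  · intro φ
    obtain ⟨ψ, hψ⟩ := hext φ
    exact ⟨ψ, LinearMap.ext hψ⟩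
  · intro ψ
    constructor
    · intro hψ
      have hk : LinearMap.ker g ≤ LinearMap.ker ψ := by
        intro b hb
        obtain ⟨a, rfl⟩ := (h b).1 hb
        exact LinearMap.congr_fun hψ a
      refine ⟨(LinearMap.ker g).liftQ ψ hk ∘ₗ (g.quotKerEquivOfSurjective hg).symm, ?_⟩
      ext b
      have : (g.quotKerEquivOfSurjective hg).symm (g b) = Submodule.Quotient.mk b := by
        rw [LinearEquiv.symm_apply_eq]; simp
      simp [this]
    · rintro ⟨φ, rfl⟩
      ext a
      simp [h.apply_apply_eq_zero]

variable [IsLocalRing R]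

lemma ln_dual_of_killed [IsArtinianRing R] (V : Type) [AddCommGroup V] [Module R V] [Module.Finite R V]
    (hV : ∀ a ∈ maximalIdeal R, ∀ v : V, a • v = 0) :
    ln R (V →ₗ[R] R) = ln R ((R ⧸ maximalIdeal R) →ₗ[R] R) * ln R V := by
  have ht : Module.IsTorsionBySet R V (maximalIdeal R) := fun v a => hV a a.2 v
  let _ := ht.module
  let _ := Ideal.Quotient.field (maximalIdeal R)
  have : IsScalarTower R (R ⧸ maximalIdeal R) V := ht.isScalarTower
  have : Module.Finite (R ⧸ maximalIdeal R) V := Module.Finite.of_restrictScalars_finite R _ V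
  let e := ((Module.finBasis (R ⧸ maximalIdeal R) V).equivFun).restrictScalars R
  have h1 : ln R (R ⧸ maximalIdeal R) = 1 := by
    have : IsSimpleModule R (R ⧸ maximalIdeal R) := by
      rw [isSimpleModule_iff_isCoatom]
      exact Ideal.isMaximal_def.1 inferInstance
    simp [ln, Module.length_eq_one]
  rw [ln_congr e, ln_pi, ln_congr (e.arrowCongr (LinearEquiv.refl R R)), ln_dual_pi, h1]
  ring

lemma ln_ring [IsArtinianRing R] : ln R R = ln R (maximalIdeal R) + 1 := by
  have h1 : ln R (R ⧸ maximalIdeal R) = 1 := by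
    have : IsSimpleModule R (R ⧸ maximalIdeal R) := by
      rw [isSimpleModule_iff_isCoatom]
      exact Ideal.isMaximal_def.1 inferInstance
    simp [ln, Module.length_eq_one]
  rw [← h1]
  exact ln_exact (maximalIdeal R).subtype (maximalIdeal R).mkQ (Submodule.subtype_injective _)
    (Submodule.mkQ_surjective _) (LinearMap.exact_subtype_mkQ _)

/-- coordinatewise inclusion -/
noncomputable def coordIncl (R : Type) [CommRing R] [IsLocalRing R] (n : ℕ) :
    (Fin n → maximalIdeal R) →ₗ[R] (Fin n → R) :=
  LinearMap.pi fun i => (maximalIdeal R).subtype ∘ₗ LinearMap.proj i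

lemma coordIncl_apply (n : ℕ) (z : Fin n → maximalIdeal R) (i : Fin n) : coordIncl R n z i = z i := rfl

lemma formula [IsArtinianRing R] {b : ℕ} {Y : Type} [AddCommGroup Y] [Module R Y]
    (p : (Fin b → R) →ₗ[R] Y) (hp : Function.Surjective p)
    (hmin : ∀ x ∈ LinearMap.ker p, ∀ i, x i ∈ maximalIdeal R)
    (hsq : ∀ a ∈ maximalIdeal R, ∀ c ∈ maximalIdeal R, ∀ y : Y, a • c • y = 0)
    (hext : ExtendsKer p) :
    b * ln R (maximalIdeal R →ₗ[R] R) + ln R (Y →ₗ[R] R) + b * ln R ((R ⧸ maximalIdeal R) →ₗ[R] R)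
      = ln R ((R ⧸ maximalIdeal R) →ₗ[R] R) * ln R Y + b * ln R R := by
  have : Module.Finite R Y := Module.Finite.of_surjective p hp
  have e1 : ln R (Fin b → R) = ln R (LinearMap.ker p) + ln R Y :=
    ln_exact (LinearMap.ker p).subtype p (Submodule.subtype_injective _) hp (LinearMap.exact_subtype_ker_map p)
  have e2 := ln_dual_exact (LinearMap.ker p).subtype p hp (LinearMap.exact_subtype_ker_map p) hext
  let V := LinearMap.range (p ∘ₗ coordIncl R b)
  let i : LinearMap.ker p →ₗ[R] (Fin b → maximalIdeal R) :=
    LinearMap.pi fun j => (LinearMap.proj j ∘ₗ (LinearMap.ker p).subtype).codRestrict (maximalIdeal R) (fun x => hmin x x.2 j)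
  have hi : ∀ x, coordIncl R b (i x) = x := fun x => rfl
  have hex : Function.Exact i (p ∘ₗ coordIncl R b).rangeRestrict := by
    intro z
    constructor
    · intro hz
      have hz' : p (coordIncl R b z) = 0 := congrArg Subtype.val hz
      exact ⟨⟨_, hz'⟩, rfl⟩
    · rintro ⟨x, rfl⟩
      ext
      change p (coordIncl R b (i x)) = 0
      rw [hi]; exact x.2
  have hinj : Function.Injective i := by
    intro x y hxy
    ext1
    rw [← hi, ← hi y, hxy]
  have e3 := ln_exact i (p ∘ₗ coordIncl R b).rangeRestrict hinj (LinearMap.surjective_rangeRestrict _) hex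
  have e4 := ln_dual_exact i (p ∘ₗ coordIncl R b).rangeRestrict (LinearMap.surjective_rangeRestrict _) hex (by
    intro φ
    obtain ⟨ψ, hψ⟩ := hext φ
    exact ⟨ψ ∘ₗ coordIncl R b, fun a => by simpa [hi] using hψ a⟩)
  have e5 : ln R (V →ₗ[R] R) = ln R ((R ⧸ maximalIdeal R) →ₗ[R] R) * ln R V := by
    apply ln_dual_of_killed
    rintro a ha ⟨_, z, rfl⟩
    ext
    change a • p (coordIncl R b z) = 0
    rw [LinearMap.pi_apply_eq_sum_univ, Finset.smul_sum]
    exact Finset.sum_eq_zero fun j _ => hsq a ha _ (z j).2 _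
  rw [ln_pi] at e1 e3
  rw [ln_dual_pi, ln_dual_self] at e2
  rw [ln_dual_pi] at e4
  have e6 := ln_ring (R := R)
  change b * _ = _ + ln R V at e3
  change b * _ = ln R (V →ₗ[R] R) + _ at e4
  generalize ln R V = v at *
  generalize ln R (V →ₗ[R] R) = v' at *
  generalize ln R (LinearMap.ker p) = k at *
  have e7 : ln R Y = b + v := by rw [e6, mul_add, e3] at e1; omega
  rw [e7, e4, e5, mul_add, e2]; ring

lemma exists_cover (X : Type) [AddCommGroup X] [Module R X] [Module.Finite R X] :
    ∃ (n : ℕ) (q : (Fin n → R) →ₗ[R] X), Function.Surjective q ∧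
      ∀ x ∈ LinearMap.ker q, ∀ i, x i ∈ maximalIdeal R := by
  let _ := Ideal.Quotient.field (maximalIdeal R)
  have : Module.Finite (R ⧸ maximalIdeal R) (X ⧸ (maximalIdeal R • ⊤ : Submodule R X)) :=
    Module.Finite.of_restrictScalars_finite R _ _
  let B := Module.finBasis (R ⧸ maximalIdeal R) (X ⧸ (maximalIdeal R • ⊤ : Submodule R X))
  choose v hv using fun i => Submodule.mkQ_surjective (maximalIdeal R • ⊤ : Submodule R X) (B i)
  let q := Fintype.linearCombination R v
  have hq : ∀ c, (maximalIdeal R • ⊤ : Submodule R X).mkQ (q c) = ∑ i, (Ideal.Quotient.mk (maximalIdeal R) (c i)) • B i := by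
    intro c
    simp only [q, Fintype.linearCombination_apply, map_sum, map_smul, hv]
    rfl
  refine ⟨_, q, ?_, ?_⟩
  · rw [← LinearMap.range_eq_top, eq_top_iff]
    apply Submodule.le_of_le_smul_of_le_jacobson_bot (I := maximalIdeal R) Module.Finite.fg_top
    · exact (IsLocalRing.jacobson_eq_maximalIdeal ⊥ bot_ne_top).ge
    · intro x _
      choose c hc using fun i => Ideal.Quotient.mk_surjective (B.repr ((maximalIdeal R • ⊤ : Submodule R X).mkQ x) i)
      have h1 : (maximalIdeal R • ⊤ : Submodule R X).mkQ (q c) = (maximalIdeal R • ⊤ : Submodule R X).mkQ x := by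
        rw [hq]; simp only [hc]; exact B.sum_repr _
      have h2 : x - q c ∈ (maximalIdeal R • ⊤ : Submodule R X) :=
        (Submodule.Quotient.eq _).1 h1.symm
      rw [← add_sub_cancel (q c) x]
      exact Submodule.add_mem_sup ⟨c, rfl⟩ h2
  · intro x hx i
    have h1 := hq x
    rw [LinearMap.mem_ker.1 hx, map_zero] at h1
    have := Fintype.linearIndependent_iff.1 B.linearIndependent _ h1.symm i
    exact Ideal.Quotient.eq_zero_iff_mem.1 this

lemma cover_length [IsArtinianRing R] {n : ℕ} {X : Type} [AddCommGroup X] [Module R X]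
    (q : (Fin n → R) →ₗ[R] X) (hq : Function.Surjective q)
    (hmin : ∀ x ∈ LinearMap.ker q, ∀ i, x i ∈ maximalIdeal R) :
    mlength R (X ⧸ (maximalIdeal R • ⊤ : Submodule R X)) = (n : ℕ∞) := by
  have : Module.Finite R X := Module.Finite.of_surjective q hq
  have hlift : ∀ y ∈ (maximalIdeal R • ⊤ : Submodule R X), ∃ z, q (coordIncl R n z) = y := by
    intro y hy
    refine Submodule.smul_induction_on hy ?_ ?_
    · intro r hr y _
      obtain ⟨x, rfl⟩ := hq y
      refine ⟨fun i => ⟨r * x i, Ideal.mul_mem_right _ _ hr⟩, ?_⟩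
      rw [← map_smul]; rfl
    · rintro _ _ ⟨z, rfl⟩ ⟨w, rfl⟩
      exact ⟨z + w, by simp⟩
  have hex : Function.Exact (coordIncl R n) ((maximalIdeal R • ⊤ : Submodule R X).mkQ ∘ₗ q) := by
    intro x
    constructor
    · intro hx
      have hx' : q x ∈ (maximalIdeal R • ⊤ : Submodule R X) := by
        rw [← Submodule.ker_mkQ (maximalIdeal R • ⊤ : Submodule R X)]; exact hx
      obtain ⟨z, hz⟩ := hlift _ hx'
      have h2 := hmin (x - coordIncl R n z) (by simp [hz])
      refine ⟨fun i => ⟨x i, ?_⟩, rfl⟩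
      have := add_mem (h2 i) (z i).2
      simpa [coordIncl_apply] using this
    · rintro ⟨z, rfl⟩
      rw [← LinearMap.mem_ker, LinearMap.ker_comp, Submodule.ker_mkQ, Submodule.mem_comap,
        LinearMap.pi_apply_eq_sum_univ]
      exact Submodule.sum_mem _ fun i _ => Submodule.smul_mem_smul (z i).2 trivial
  have e := ln_exact (coordIncl R n) ((maximalIdeal R • ⊤ : Submodule R X).mkQ ∘ₗ q)
    (fun x y h => by ext i; exact congrFun h i)
    ((Submodule.mkQ_surjective _).comp hq) hex
  rw [ln_pi, ln_pi, ln_ring] at e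
  have e' : ln R (X ⧸ (maximalIdeal R • ⊤ : Submodule R X)) = n := by rw [mul_add] at e; omega
  rw [mlength, ← Module.coe_length, ← coe_ln, e']
end lengths

section final
open IsLocalRing

variable {R : Type} [CommRing R] [IsLocalRing R]

/-- pairing of coordinates -/
noncomputable def dot (R : Type) [CommRing R] (b : ℕ) : (Fin b → R) →ₗ[R] (Fin b → R) →ₗ[R] R :=
  LinearMap.mk₂ R (fun c x => ∑ i, c i * x i)
    (by intros; simp [add_mul, Finset.sum_add_distrib])
    (by intros; simp [Finset.mul_sum, mul_assoc])
    (by intros; simp [mul_add, Finset.sum_add_distrib])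
    (by intros; simp [Finset.mul_sum, mul_left_comm])

lemma dot_apply (b : ℕ) (c x : Fin b → R) : dot R b c x = ∑ i, c i * x i := rfl

lemma exists_dot (b : ℕ) (f : (Fin b → R) →ₗ[R] R) :
    ∀ x, f x = dot R b (fun i => f (fun j => if i = j then 1 else 0)) x := by
  intro x
  rw [LinearMap.pi_apply_eq_sum_univ, dot_apply]
  simp [mul_comm]

/-- the presentation of the dual of the kernel -/
noncomputable def dualPres {b : ℕ} {X : Type} [AddCommGroup X] [Module R X]
    (p : (Fin b → R) →ₗ[R] X) : (Fin b → R) →ₗ[R] (LinearMap.ker p →ₗ[R] R) :=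
  (LinearMap.lcomp R R (LinearMap.ker p).subtype) ∘ₗ dot R b

lemma dualPres_apply {b : ℕ} {X : Type} [AddCommGroup X] [Module R X]
    (p : (Fin b → R) →ₗ[R] X) (c : Fin b → R) (x : LinearMap.ker p) :
    dualPres p c x = dot R b c x := rfl

/-- the coordinates of a functional -/
noncomputable def coordsDual {b : ℕ} {X : Type} [AddCommGroup X] [Module R X]
    (p : (Fin b → R) →ₗ[R] X) : (X →ₗ[R] R) →ₗ[R] (Fin b → R) :=
  LinearMap.pi fun i => LinearMap.applyₗ (p (fun j => if i = j then 1 else 0))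

lemma dot_coordsDual {b : ℕ} {X : Type} [AddCommGroup X] [Module R X]
    (p : (Fin b → R) →ₗ[R] X) (f : X →ₗ[R] R) (x : Fin b → R) :
    dot R b (coordsDual p f) x = f (p x) :=
  (exists_dot b (f ∘ₗ p) x).symm

lemma dualPres_exact {b : ℕ} {X : Type} [AddCommGroup X] [Module R X]
    (p : (Fin b → R) →ₗ[R] X) (hp : Function.Surjective p) :
    Function.Exact (coordsDual p) (dualPres p) := by
  intro c
  constructor
  · intro hc
    have hk : LinearMap.ker p ≤ LinearMap.ker (dot R b c) := fun x hx =>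
      LinearMap.congr_fun hc ⟨x, hx⟩
    let f : X →ₗ[R] R := (LinearMap.ker p).liftQ _ hk ∘ₗ (p.quotKerEquivOfSurjective hp).symm
    have hf : ∀ x, f (p x) = dot R b c x := by
      intro x
      have : (p.quotKerEquivOfSurjective hp).symm (p x) = Submodule.Quotient.mk x := by
        rw [LinearEquiv.symm_apply_eq]; simp
      simp [f, this]
    refine ⟨f, ?_⟩
    ext i
    change f (p _) = _
    rw [hf, dot_apply]
    simp
  · rintro ⟨f, rfl⟩
    ext x
    have hx : p x = 0 := x.2
    rw [dualPres_apply, dot_coordsDual, hx]; simp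

lemma coordsDual_injective {b : ℕ} {X : Type} [AddCommGroup X] [Module R X]
    (p : (Fin b → R) →ₗ[R] X) (hp : Function.Surjective p) : Function.Injective (coordsDual p) := by
  intro f g h
  ext x
  obtain ⟨x, rfl⟩ := hp x
  rw [← dot_coordsDual, ← dot_coordsDual, h]

lemma dualPres_surjective {b : ℕ} {X : Type} [AddCommGroup X] [Module R X]
    (p : (Fin b → R) →ₗ[R] X) (hext : ExtendsKer p) : Function.Surjective (dualPres p) := by
  intro φ
  obtain ⟨g, hg⟩ := hext φ
  refine ⟨fun i => g (fun j => if i = j then 1 else 0), LinearMap.ext fun x => ?_⟩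
  rw [← hg, exists_dot b g]
  rfl

lemma cube_zero (hm3 : (maximalIdeal R) ^ 3 = ⊥) {a c x : R} (ha : a ∈ maximalIdeal R)
    (hc : c ∈ maximalIdeal R) (hx : x ∈ maximalIdeal R) : a * (c * x) = 0 := by
  have : a * (c * x) ∈ (maximalIdeal R)^3 := by
    rw [pow_three]
    exact Ideal.mul_mem_mul ha (Ideal.mul_mem_mul hc hx)
  rwa [hm3] at this

lemma step_lemma [IsArtinianRing R] (hm3 : (maximalIdeal R) ^ 3 = ⊥)
    {b : ℕ} {X : Type} [AddCommGroup X] [Module R X]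
    (p : (Fin b → R) →ₗ[R] X) (hp : Function.Surjective p)
    (hmin : ∀ x ∈ LinearMap.ker p, ∀ i, x i ∈ maximalIdeal R)
    (hext : ExtendsKer p)
    (hsq : ∀ a ∈ maximalIdeal R, ∀ c ∈ maximalIdeal R, ∀ y : X, a • c • y = 0)
    (hfun : ∀ (f : X →ₗ[R] R) (x : X), f x ∈ maximalIdeal R)
    (hev : ∀ g : (X →ₗ[R] R) →ₗ[R] R, ∃ x, ∀ f, g f = f x) :
    b * ln R R = ln R (LinearMap.ker p) + ln R X ∧
    b * ln R R = ln R (X →ₗ[R] R) + ln R (LinearMap.ker p →ₗ[R] R) ∧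
    b * ln R R = ln R ((LinearMap.ker p →ₗ[R] R) →ₗ[R] R) + ln R ((X →ₗ[R] R) →ₗ[R] R) ∧
    b * ln R (maximalIdeal R →ₗ[R] R) + ln R (X →ₗ[R] R) + b * ln R ((R ⧸ maximalIdeal R) →ₗ[R] R)
      = ln R ((R ⧸ maximalIdeal R) →ₗ[R] R) * ln R X + b * ln R R ∧
    b * ln R (maximalIdeal R →ₗ[R] R) + ln R ((LinearMap.ker p →ₗ[R] R) →ₗ[R] R)
        + b * ln R ((R ⧸ maximalIdeal R) →ₗ[R] R)
      = ln R ((R ⧸ maximalIdeal R) →ₗ[R] R) * ln R (LinearMap.ker p →ₗ[R] R) + b * ln R R := by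
  have hex := dualPres_exact p hp
  have hsurj := dualPres_surjective p hext
  have hextD : ∀ φ : (X →ₗ[R] R) →ₗ[R] R, ∃ ψ : (Fin b → R) →ₗ[R] R, ∀ f, ψ (coordsDual p f) = φ f := by
    intro φ
    obtain ⟨x, hx⟩ := hev φ
    obtain ⟨y, rfl⟩ := hp x
    exact ⟨(dot R b).flip y, fun f => by rw [hx, LinearMap.flip_apply, dot_coordsDual]⟩
  refine ⟨?_, ?_, ?_, formula p hp hmin hsq hext, formula (dualPres p) hsurj ?_ ?_ ?_⟩
  · rw [← ln_pi]
    exact ln_exact (LinearMap.ker p).subtype p (Submodule.subtype_injective _) hp (LinearMap.exact_subtype_ker_map p)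
  · rw [← ln_pi]
    exact ln_exact _ _ (coordsDual_injective p hp) hsurj hex
  · have := ln_dual_exact _ _ hsurj hex hextD
    rwa [ln_dual_pi, ln_dual_self] at this
  · intro c hc i
    obtain ⟨f, rfl⟩ := (hex c).1 hc
    exact hfun f _
  · intro a ha c hc φ
    obtain ⟨d, rfl⟩ := hsurj φ
    ext x
    simp only [LinearMap.smul_apply, dualPres_apply, dot_apply, smul_eq_mul, LinearMap.zero_apply]
    exact cube_zero hm3 ha hc (Ideal.sum_mem _ fun i _ => Ideal.mul_mem_left _ _ (hmin x x.2 i))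
  · intro φ
    have hmem : ∀ f, coordsDual p f ∈ LinearMap.ker (dualPres p) := fun f => hex.apply_apply_eq_zero f
    obtain ⟨ψ, hψ⟩ := hextD (φ ∘ₗ (coordsDual p).codRestrict _ hmem)
    refine ⟨ψ, ?_⟩
    rintro ⟨c, hc⟩
    obtain ⟨f, rfl⟩ := (hex c).1 hc
    exact hψ f

lemma ker_props (hm3 : (maximalIdeal R) ^ 3 = ⊥)
    {b : ℕ} {X : Type} [AddCommGroup X] [Module R X]
    (p : (Fin b → R) →ₗ[R] X) (hp : Function.Surjective p)
    (hmin : ∀ x ∈ LinearMap.ker p, ∀ i, x i ∈ maximalIdeal R)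
    (hext : ExtendsKer p)
    (hinj : ∀ x : X, (∀ f : X →ₗ[R] R, f x = 0) → x = 0) :
    (∀ a ∈ maximalIdeal R, ∀ c ∈ maximalIdeal R, ∀ y : LinearMap.ker p, a • c • y = 0) ∧
    (∀ (f : LinearMap.ker p →ₗ[R] R) (x : LinearMap.ker p), f x ∈ maximalIdeal R) ∧
    (∀ g : (LinearMap.ker p →ₗ[R] R) →ₗ[R] R, ∃ x, ∀ f, g f = f x) := by
  have hex := dualPres_exact p hp
  have hsurj := dualPres_surjective p hext
  refine ⟨?_, ?_, ?_⟩
  · intro a ha c hc y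
    ext i
    exact cube_zero hm3 ha hc (hmin y y.2 i)
  · intro f x
    obtain ⟨d, rfl⟩ := hsurj f
    rw [dualPres_apply, dot_apply]
    exact Ideal.sum_mem _ fun i _ => Ideal.mul_mem_left _ _ (hmin x x.2 i)
  · intro g
    have hy := exists_dot b (g ∘ₗ dualPres p)
    set y : Fin b → R := fun i => (g ∘ₗ dualPres p) (fun j => if i = j then 1 else 0)
    have hcomm : ∀ c d, dot R b c d = dot R b d c := fun c d => by
      simp only [dot_apply, mul_comm]
    refine ⟨⟨y, ?_⟩, ?_⟩
    · apply hinj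
      intro f
      rw [← dot_coordsDual, hcomm, ← hy, LinearMap.comp_apply, hex.apply_apply_eq_zero, map_zero]
    · intro f
      obtain ⟨d, rfl⟩ := hsurj f
      rw [dualPres_apply, hcomm, ← hy]; rfl

lemma functional_mem {M : Type} [AddCommGroup M] [Module R M]
    (hind : IsIndecomposableModule R M) (hnf : ¬ Module.Free R M) (f : M →ₗ[R] R) (x : M) :
    f x ∈ maximalIdeal R := by
  by_contra hu
  have hu : IsUnit (f x) := by simpa using hu
  obtain ⟨u, hu⟩ := hu
  have hc : IsCompl (LinearMap.ker f) (Submodule.span R {x}) := by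
    constructor
    · rw [Submodule.disjoint_def]
      intro y hy hy'
      obtain ⟨c, rfl⟩ := Submodule.mem_span_singleton.1 hy'
      rw [LinearMap.mem_ker, map_smul, ← hu, smul_eq_mul, Units.mul_left_eq_zero] at hy
      simp [hy]
    · rw [codisjoint_iff, eq_top_iff]
      intro y _
      rw [← sub_add_cancel y ((f y * (u⁻¹ : Rˣ)) • x)]
      refine Submodule.add_mem_sup ?_ (Submodule.smul_mem _ _ (Submodule.mem_span_singleton_self x))
      rw [LinearMap.mem_ker, map_sub, map_smul, ← hu]
      simp
  rcases hind.2 _ _ hc with h | h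
  · apply hnf
    have hs : Function.Surjective f := by
      intro r
      refine ⟨(r * (u⁻¹ : Rˣ)) • x, ?_⟩
      rw [map_smul, ← hu]; simp
    exact Module.Free.of_equiv (LinearEquiv.ofBijective f ⟨LinearMap.ker_eq_bot.1 h, hs⟩).symm
  · have hx : x = 0 := by simpa using h
    rw [hx, map_zero] at hu
    exact u.ne_zero hu

lemma excess_ne_zero [IsNoetherianRing R] [IsArtinianRing R] (hm3 : (maximalIdeal R) ^ 3 = ⊥)
    (hng : ¬ IsGorensteinLocalRing R) :
    ln R (maximalIdeal R →ₗ[R] R) + ln R ((R ⧸ maximalIdeal R) →ₗ[R] R) ≠ ln R R := by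
  intro h
  apply hng
  let ρ : (R →ₗ[R] R) →ₗ[R] (maximalIdeal R →ₗ[R] R) := LinearMap.lcomp R R (maximalIdeal R).subtype
  have e1 : ln R (R →ₗ[R] R) = ln R ((R ⧸ maximalIdeal R) →ₗ[R] R) + ln R (LinearMap.range ρ) := by
    refine ln_exact (LinearMap.lcomp R R (maximalIdeal R).mkQ) ρ.rangeRestrict ?_ (LinearMap.surjective_rangeRestrict _) ?_
    · intro φ ψ hh
      ext
      exact LinearMap.congr_fun hh 1
    · intro φ
      constructor
      · intro hφ
        have hφ' : ρ φ = 0 := congrArg Subtype.val hφ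
        refine ⟨(maximalIdeal R).liftQ φ fun x hx => LinearMap.congr_fun hφ' ⟨x, hx⟩, ?_⟩
        ext; rfl
      · rintro ⟨ψ, rfl⟩
        ext x
        have : (Submodule.Quotient.mk (x : R) : R ⧸ maximalIdeal R) = 0 :=
          (Submodule.Quotient.mk_eq_zero _).2 x.2
        change ψ (Submodule.Quotient.mk (x : R)) = 0
        rw [this, map_zero]
  rw [ln_dual_self] at e1
  have htop : LinearMap.range ρ = ⊤ := by
    by_contra hne
    have := Submodule.length_lt hne
    rw [← coe_ln, ← coe_ln] at this
    have : ln R (LinearMap.range ρ) < ln R (maximalIdeal R →ₗ[R] R) := by exact_mod_cast this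
    omega
  apply gorenstein_of_extend R hm3
  intro f
  obtain ⟨g, hg⟩ := LinearMap.range_eq_top.1 htop f
  refine ⟨g 1, fun a => ?_⟩
  rw [← hg]
  change g a = _
  rw [← smul_eq_mul, ← map_smul, smul_eq_mul, mul_one]

lemma arith (L N r x0 x1 x2 y0 y1 y2 z0 z1 z2 b0 b1 : ℕ) (hL : 0 < L) (hb : 0 < b0) (hE : N + r ≠ L)
    (a1 : b0 * L = x1 + x0) (a2 : b0 * L = y0 + y1) (a3 : b0 * L = z1 + z0)
    (a4 : b0 * N + y0 + b0 * r = r * x0 + b0 * L) (a5 : b0 * N + z1 + b0 * r = r * y1 + b0 * L)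
    (c1 : b1 * L = x2 + x1) (c2 : b1 * L = y1 + y2) (c3 : b1 * L = z2 + z1)
    (c4 : b1 * N + y1 + b1 * r = r * x1 + b1 * L) (c5 : b1 * N + z2 + b1 * r = r * y2 + b1 * L) :
    b1 = b0 := by
  zify at *
  have k1 : (b0 + b1) * (N + r - L) = ((r : ℤ) - 1) * L * b0 := by
    linear_combination a4 + c4 + (a2) - r * a1
  have k2 : (b0 + b1) * (N + r - L) = ((r : ℤ) - 1) * L * b1 := by
    linear_combination a5 + c5 + c3 - r * c2
  have k3 : ((r : ℤ) - 1) * L * (b1 - b0) = 0 := by linear_combination k1 - k2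
  rcases mul_eq_zero.1 k3 with h | h
  · exfalso
    rw [h, zero_mul] at k1
    rcases mul_eq_zero.1 k1 with h' | h'
    · omega
    · apply hE; linarith
  · linarith

lemma no_socle_gen [IsNoetherianRing R] (hm3 : (maximalIdeal R) ^ 3 = ⊥)
    (hng : ¬ IsGorensteinLocalRing R) {n : ℕ} {X : Type} [AddCommGroup X] [Module R X]
    (q : (Fin n → R) →ₗ[R] X)
    (hmin : ∀ x ∈ LinearMap.ker q, ∀ i, x i ∈ maximalIdeal R) (hext : ExtendsKer q)
    (c : Fin n → R) (hc : ∀ a ∈ maximalIdeal R, a • q c = 0) (i : Fin n) : c i ∈ maximalIdeal R := by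
  by_contra hu
  have hu : IsUnit (c i) := by simpa using hu
  obtain ⟨u, hu⟩ := hu
  apply hng
  apply gorenstein_of_extend R hm3
  intro f
  let t : LinearMap.ker q →ₗ[R] maximalIdeal R :=
    (LinearMap.proj i ∘ₗ (LinearMap.ker q).subtype).codRestrict (maximalIdeal R) (fun x => hmin x x.2 i)
  obtain ⟨g, hg⟩ := hext (f ∘ₗ t)
  refine ⟨(u⁻¹ : Rˣ) * g c, fun a => ?_⟩
  have h1 := hg ⟨(a : R) • c, by rw [LinearMap.mem_ker, map_smul]; exact hc a a.2⟩
  have h2 : t ⟨(a : R) • c, by rw [LinearMap.mem_ker, map_smul]; exact hc a a.2⟩ = (u : R) • a := by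
    ext
    change (a : R) * c i = u * a
    rw [hu, mul_comm]
  rw [LinearMap.comp_apply, h2, map_smul, map_smul, smul_eq_mul, smul_eq_mul] at h1
  have : f a = (u⁻¹ : Rˣ) * ((u : R) * f a) := by simp
  rw [this, ← h1]; ring

end final

/-- for a minimal free cover π : R^b → M with syzygy ΩM = ker π,
one has m·ΩM = m²·R^b, and ΩM is minimally generated by b elements. -/
theorem stmt_10 (R : Type) [CommRing R] [IsNoetherianRing R] [IsLocalRing R]
    (hng : ¬ IsGorensteinLocalRing R)
    (hm3 : (IsLocalRing.maximalIdeal R) ^ 3 = ⊥)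
    (hm2 : (IsLocalRing.maximalIdeal R) ^ 2 ≠ ⊥)
    (M : Type) [AddCommGroup M] [Module R M] [Module.Finite R M]
    (hind : IsIndecomposableModule R M) (hnf : ¬ Module.Free R M)
    (hG : GDimZero R M)
    (b : ℕ) (π : (Fin b → R) →ₗ[R] M) (hsurj : Function.Surjective π)
    (hmin : LinearMap.ker π ≤ (IsLocalRing.maximalIdeal R) • (⊤ : Submodule R (Fin b → R))) :
    (IsLocalRing.maximalIdeal R) • (LinearMap.ker π) =
      ((IsLocalRing.maximalIdeal R) ^ 2) • (⊤ : Submodule R (Fin b → R)) ∧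
    mlength R ((↥(LinearMap.ker π)) ⧸
      ((IsLocalRing.maximalIdeal R) • (⊤ : Submodule R ↥(LinearMap.ker π)))) = (b : ℕ∞) := by
  have hart : IsArtinianRing R := (isArtinianRing_iff_isNilpotent_maximalIdeal R).2 ⟨3, hm3⟩
  have hcoord : ∀ x ∈ LinearMap.ker π, ∀ i, x i ∈ IsLocalRing.maximalIdeal R := by
    intro x hx i
    refine Submodule.smul_induction_on (p := fun x : Fin b → R => x i ∈ IsLocalRing.maximalIdeal R) (hmin hx) ?_ ?_
    · intro r hr y _
      exact Ideal.mul_mem_right _ _ hr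
    · intro y z hy hz
      exact add_mem hy hz
  obtain ⟨n, q, hq, hqmin⟩ := exists_cover (R := R) (LinearMap.ker π)
  obtain ⟨hbij, hE1, -⟩ := hG
  obtain ⟨hext0, hext1⟩ := extendsKer_of_ext (hE1 1 one_pos) (hE1 2 two_pos) π hsurj q hq
  have hfun0 := functional_mem hind hnf
  have hinj0 : ∀ x : M, (∀ f : M →ₗ[R] R, f x = 0) → x = 0 := by
    intro x hx
    apply hbij.1
    rw [map_zero]
    exact LinearMap.ext hx
  have hev0 : ∀ g : (M →ₗ[R] R) →ₗ[R] R, ∃ x, ∀ f, g f = f x := by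
    intro g
    obtain ⟨x, rfl⟩ := hbij.2 g
    exact ⟨x, fun f => rfl⟩
  have hsq0 : ∀ a ∈ IsLocalRing.maximalIdeal R, ∀ c ∈ IsLocalRing.maximalIdeal R, ∀ y : M, a • c • y = 0 := by
    intro a ha c hc y
    apply hinj0
    intro f
    rw [map_smul, map_smul]
    exact cube_zero hm3 ha hc (hfun0 f y)
  obtain ⟨hsq1, hfun1, hev1⟩ := ker_props hm3 π hsurj hcoord hext0 hinj0
  obtain ⟨a1, a2, a3, a4, a5⟩ := step_lemma hm3 π hsurj hcoord hext0 hsq0 hfun0 hev0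
  obtain ⟨c1, c2, c3, c4, c5⟩ := step_lemma hm3 q hq hqmin hext1 hsq1 hfun1 hev1
  constructor
  · apply le_antisymm
    · rw [pow_two, mul_smul]
      exact Submodule.smul_mono le_rfl hmin
    · intro x hx
      have hxk : x ∈ LinearMap.ker π := by
        rw [pow_two, mul_smul] at hx
        refine Submodule.smul_induction_on hx ?_ (fun _ _ h1 h2 => add_mem h1 h2)
        intro r hr y hy
        refine Submodule.smul_induction_on (p := fun y => r • y ∈ LinearMap.ker π) hy ?_
          (fun _ _ h1 h2 => by rw [smul_add]; exact add_mem h1 h2)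
        intro s hs z _
        rw [LinearMap.mem_ker, map_smul, map_smul]
        exact hsq0 r hr s hs _
      have hx0 : ∀ a ∈ IsLocalRing.maximalIdeal R, a • x = 0 := by
        intro a ha
        have := Submodule.smul_mem_smul ha hx
        rw [← mul_smul, ← pow_succ', hm3, Submodule.bot_smul] at this
        exact this
      obtain ⟨c, hc⟩ := hq ⟨x, hxk⟩
      have hcm := no_socle_gen hm3 hng q hqmin hext1 c (by
        intro a ha
        rw [hc]; ext1; exact hx0 a ha)
      have hx' : x = (LinearMap.ker π).subtype (q c) := by rw [hc]; rfl
      rw [hx', LinearMap.pi_apply_eq_sum_univ q, map_sum]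
      refine Submodule.sum_mem _ fun i _ => ?_
      rw [map_smul]
      exact Submodule.smul_mem_smul (hcm i) (Subtype.property _)
  · rw [cover_length q hq hqmin]
    have hz : ln R ((M →ₗ[R] R) →ₗ[R] R) = ln R M := (ln_congr (LinearEquiv.ofBijective _ hbij)).symm
    have hL : 0 < ln R R := by rw [ln_ring]; omega
    have hb : 0 < b := by
      rcases Nat.eq_zero_or_pos b with rfl | h
      · exfalso
        apply hind.1
        rw [eq_comm, Submodule.eq_bot_iff]
        intro y _
        obtain ⟨z, rfl⟩ := hsurj y
        rw [Subsingleton.elim z 0, map_zero]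
      · exact h
    have := arith _ _ _ _ _ _ _ _ _ _ _ _ b n hL hb (excess_ne_zero hm3 hng) a1 a2 a3 a4 a5 c1 c2 c3 c4 c5
    rw [this]
end
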